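/- arXiv:math/0208161 — 6 statements merged into one kernel-verified Lean document; each statement's English description precedes it below -/
import Mathlib

section
/- Restriction to {0, 1, …, g} is a bijection from the set of final sequences of length 2g onto the set of elementary sequences of length g; in other words, every elementary sequence φ of length g extends uniquely to a final sequence ψ of length 2g with ψ(i) = φ(i) for all 0 ≤ i ≤ g (the extension is given by ψ(2g − i) = φ(i) + g − i for 0 ≤ i ≤ g). -/
/-- An *elementary sequence* of length `g`: `φ 0 = 0` and
`φ (i-1) ≤ φ i ≤ φ (i-1) + 1` for all `1 ≤ i ≤ g`.
(Only the values `φ 0, …, φ g` are relevant.) -/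
def IsElemSeq (g : ℕ) (φ : ℕ → ℕ) : Prop :=
  φ 0 = 0 ∧ ∀ i, 1 ≤ i → i ≤ g → φ (i - 1) ≤ φ i ∧ φ i ≤ φ (i - 1) + 1

/-- A *final sequence* of length `2g`: `ψ 0 = 0`, `ψ j - ψ (j-1) ∈ {0, 1}` for all
`1 ≤ j ≤ 2g`, and `ψ (2g - i) = ψ i + (g - i)` for all `0 ≤ i ≤ g`.
(Only the values `ψ 0, …, ψ (2g)` are relevant.) -/
def IsFinalSeq (g : ℕ) (ψ : ℕ → ℕ) : Prop :=
  ψ 0 = 0 ∧ (∀ j, 1 ≤ j → j ≤ 2 * g → ψ (j - 1) ≤ ψ j ∧ ψ j ≤ ψ (j - 1) + 1) ∧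
    ∀ i ≤ g, ψ (2 * g - i) = ψ i + (g - i)

/-- The extension of `φ 0, …, φ g` to `{0, 1, …, 2g}` by the reflection rule
`2g - i ↦ φ i + (g - i)`. It is written in terms of `j = 2g - i`; the values at `j > 2g` are
junk. -/
def finalExt (g : ℕ) (φ : ℕ → ℕ) (j : ℕ) : ℕ :=
  if j ≤ g then φ j else φ (2 * g - j) + (j - g)

section

variable {g i j : ℕ} {φ ψ ψ' : ℕ → ℕ}

theorem finalExt_of_le (hi : i ≤ g) : finalExt g φ i = φ i :=
  if_pos hi

theorem finalExt_two_mul_sub (hi : i ≤ g) : finalExt g φ (2 * g - i) = φ i + (g - i) := by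
  rcases hi.eq_or_lt with rfl | hlt
  · have hmid : 2 * i - i = i := by omega
    rw [hmid, finalExt_of_le le_rfl, Nat.sub_self, Nat.add_zero]
  · have hupper : ¬ 2 * g - i ≤ g := by omega
    have hreflect : 2 * g - (2 * g - i) = i := by omega
    have hexcess : 2 * g - i - g = g - i := by omega
    rw [finalExt, if_neg hupper, hreflect, hexcess]

-- Reflection complements increments: the step of the extension from `2g - i` to `2g - (i - 1)`
-- is `1 - (φ i - φ (i - 1))`, so it lies in `{0, 1}` exactly when the step of `φ` at `i` does.
theorem IsElemSeq.finalExt_step (hφ : IsElemSeq g φ) (hj : 1 ≤ j) (hj' : j ≤ 2 * g) :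
    finalExt g φ (j - 1) ≤ finalExt g φ j ∧ finalExt g φ j ≤ finalExt g φ (j - 1) + 1 := by
  rcases le_or_gt j g with hlower | hupper
  · rw [finalExt_of_le hlower, finalExt_of_le ((Nat.sub_le j 1).trans hlower)]
    exact hφ.2 j hj hlower
  · obtain ⟨i, hi, hig, rfl⟩ : ∃ i, 1 ≤ i ∧ i ≤ g ∧ j = 2 * g - (i - 1) :=
      ⟨2 * g - j + 1, by omega, by omega, by omega⟩
    have hpred : 2 * g - (i - 1) - 1 = 2 * g - i := by omega
    rw [hpred, finalExt_two_mul_sub hig, finalExt_two_mul_sub ((Nat.sub_le i 1).trans hig)]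
    have hstep := hφ.2 i hi hig
    omega

theorem IsElemSeq.isFinalSeq_finalExt (hφ : IsElemSeq g φ) : IsFinalSeq g (finalExt g φ) := by
  refine ⟨?_, fun j => hφ.finalExt_step, fun i hi => ?_⟩
  · rw [finalExt_of_le g.zero_le, hφ.1]
  · rw [finalExt_two_mul_sub hi, finalExt_of_le hi]

theorem IsFinalSeq.isElemSeq (hψ : IsFinalSeq g ψ) : IsElemSeq g ψ :=
  ⟨hψ.1, fun i hi hig => hψ.2.1 i hi (by omega)⟩

theorem IsFinalSeq.eqOn_of_eqOn (hψ : IsFinalSeq g ψ) (hψ' : IsFinalSeq g ψ')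
    (h : Set.EqOn ψ ψ' (Set.Iic g)) : Set.EqOn ψ ψ' (Set.Iic (2 * g)) := by
  intro j (hj : j ≤ 2 * g)
  rcases le_or_gt j g with hlower | hupper
  · exact h hlower
  · obtain ⟨i, hi, rfl⟩ : ∃ i ≤ g, j = 2 * g - i := ⟨2 * g - j, by omega, by omega⟩
    rw [hψ.2.2 i hi, hψ'.2.2 i hi, h hi]

end

/-- Restriction to `{0, 1, …, g}` is a bijection from final sequences of length `2g`
onto elementary sequences of length `g`: the restriction of any final sequence is
elementary, and every elementary sequence `φ` of length `g` extends to a final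
sequence `ψ` of length `2g` with `ψ i = φ i` for `0 ≤ i ≤ g`, uniquely determined
on `{0, 1, …, 2g}`; the extension is given by `ψ (2g - i) = φ i + (g - i)` for
`0 ≤ i ≤ g`. -/
theorem finalSeq_restriction_bijective (g : ℕ) (hg : 1 ≤ g) :
    (∀ ψ : ℕ → ℕ, IsFinalSeq g ψ → IsElemSeq g ψ) ∧
    ∀ φ : ℕ → ℕ, IsElemSeq g φ →
      ∃ ψ : ℕ → ℕ, IsFinalSeq g ψ ∧ (∀ i ≤ g, ψ i = φ i) ∧
        (∀ i ≤ g, ψ (2 * g - i) = φ i + (g - i)) ∧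
        ∀ ψ' : ℕ → ℕ, IsFinalSeq g ψ' → (∀ i ≤ g, ψ' i = φ i) →
          ∀ j ≤ 2 * g, ψ' j = ψ j := by
  refine ⟨fun ψ hψ => hψ.isElemSeq, fun φ hφ => ?_⟩
  refine ⟨finalExt g φ, hφ.isFinalSeq_finalExt, fun i => finalExt_of_le,
    fun i => finalExt_two_mul_sub, fun ψ' hψ' hext => ?_⟩
  have hagree : Set.EqOn ψ' (finalExt g φ) (Set.Iic g) := fun i hi =>
    (hext i hi).trans (finalExt_of_le hi).symm
  exact fun j hj => hψ'.eqOn_of_eqOn hφ.isFinalSeq_finalExt hagree hj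
end

section
/- The smallest collection C of k-subspaces of M that contains 0 and M and is closed under the two operations N ↦ F(N) (image under F) and N ↦ V^{−1}(N) (preimage under V) is finite and totally ordered by inclusion. (The resulting chain 0 = N_0 ⊊ N_1 ⊊ ⋯ ⊊ N_r = M is the canonical filtration of (M, F, V).) -/
open Module

instance frobenius_surjective_inst (p : ℕ) [Fact p.Prime] (k : Type*) [Field k] [CharP k p]
    [PerfectRing k p] : RingHomSurjective (frobenius k p) :=
  ⟨(frobeniusEquiv k p).surjective⟩

instance frobeniusEquiv_symm_surjective_inst (p : ℕ) [Fact p.Prime] (k : Type*) [Field k]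
    [CharP k p] [PerfectRing k p] :
    RingHomSurjective ((frobeniusEquiv k p).symm : k →+* k) :=
  ⟨(frobeniusEquiv k p).symm.surjective⟩

/-!
Since `V ∘ F = 0`, every image `F(A)` lies below every preimage `V⁻¹(B)`. Hence two members of the
generated collection are comparable: either they arise by different operations, and then `F(A)`
is the smaller one, or they arise by the same operation, and monotonicity reduces to `A` and `B`.
Finiteness holds because a chain of submodules satisfying both chain conditions is finite.
-/

section Order

variable {α : Type*}

/-- The smallest subset of a bounded order containing `⊥` and `⊤` and closed under the two
operations `f` and `g`; the order-theoretic form of the canonical filtration. -/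
inductive botTopClosure [LE α] [BoundedOrder α] (f g : α → α) : Set α
  | bot : botTopClosure f g ⊥
  | top : botTopClosure f g ⊤
  | left {a : α} (ha : botTopClosure f g a) : botTopClosure f g (f a)
  | right {a : α} (ha : botTopClosure f g a) : botTopClosure f g (g a)

theorem botTopClosure.le_total [Preorder α] [BoundedOrder α] {f g : α → α} (hf : Monotone f)
    (hg : Monotone g) (hfg : ∀ a b, f a ≤ g b) {a b : α} (ha : a ∈ botTopClosure f g)
    (hb : b ∈ botTopClosure f g) : a ≤ b ∨ b ≤ a := by
  induction ha generalizing b with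
  | bot => exact .inl bot_le
  | top => exact .inr le_top
  | left _ ih =>
    cases hb with
    | bot => exact .inr bot_le
    | top => exact .inl le_top
    | left hb => exact (ih hb).imp (hf ·) (hf ·)
    | right _ => exact .inl (hfg _ _)
  | right _ ih =>
    cases hb with
    | bot => exact .inr bot_le
    | top => exact .inl le_top
    | left _ => exact .inr (hfg _ _)
    | right hb => exact (ih hb).imp (hg ·) (hg ·)

theorem botTopClosure.isChain [Preorder α] [BoundedOrder α] {f g : α → α} (hf : Monotone f)
    (hg : Monotone g) (hfg : ∀ a b, f a ≤ g b) : IsChain (· ≤ ·) (botTopClosure f g) :=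
  fun _ ha _ hb _ => le_total hf hg hfg ha hb

open Classical in
theorem finite_of_isChain_of_wellFoundedLT_of_wellFoundedGT [PartialOrder α] [WellFoundedLT α]
    [WellFoundedGT α] {s : Set α} (hs : IsChain (· ≤ ·) s) : s.Finite :=
  letI := hs.linearOrder
  Finite.of_wellFoundedLT_wellFoundedGT s

end Order

section Module

theorem map_le_comap_of_range_le_ker {R R₂ R₃ M M₂ M₃ : Type*} [Semiring R] [Semiring R₂]
    [Semiring R₃] [AddCommMonoid M] [AddCommMonoid M₂] [AddCommMonoid M₃] [Module R M]
    [Module R₂ M₂] [Module R₃ M₃] {σ : R →+* R₂} {τ : R₂ →+* R₃} [RingHomSurjective σ]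
    {F : M →ₛₗ[σ] M₂} {V : M₂ →ₛₗ[τ] M₃} (hVF : LinearMap.range F ≤ LinearMap.ker V)
    (A : Submodule R M) (B : Submodule R₃ M₃) : A.map F ≤ B.comap V :=
  calc
    A.map F ≤ LinearMap.range F := LinearMap.map_le_range
    _ ≤ LinearMap.ker V := hVF
    _ ≤ B.comap V := Submodule.comap_mono bot_le

variable {R M : Type*} [Semiring R] [AddCommMonoid M] [Module R M] {σ τ : R →+* R}
  [RingHomSurjective σ]

/-- The canonical filtration of a module with semilinear endomorphisms `F` and `V`, as the set of
its members: the smallest collection of submodules that contains `⊥` and `⊤` and is closed under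
images by `F` and preimages by `V`. -/
def canonicalFiltration (F : M →ₛₗ[σ] M) (V : M →ₛₗ[τ] M) : Set (Submodule R M) :=
  botTopClosure (Submodule.map F) (Submodule.comap V)

theorem canonicalFiltration.isChain {F : M →ₛₗ[σ] M} {V : M →ₛₗ[τ] M}
    (hVF : LinearMap.range F ≤ LinearMap.ker V) : IsChain (· ≤ ·) (canonicalFiltration F V) :=
  botTopClosure.isChain (fun _ _ => Submodule.map_mono) (fun _ _ => Submodule.comap_mono)
    (map_le_comap_of_range_le_ker hVF)

theorem canonical_filtration_finite_chain_general [IsNoetherian R M] [IsArtinian R M]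
    {F : M →ₛₗ[σ] M} {V : M →ₛₗ[τ] M} (hVF : LinearMap.range F ≤ LinearMap.ker V) :
    (canonicalFiltration F V).Finite ∧ IsChain (· ≤ ·) (canonicalFiltration F V) :=
  have hchain := canonicalFiltration.isChain hVF
  ⟨finite_of_isChain_of_wellFoundedLT_of_wellFoundedGT hchain, hchain⟩

end Module

/-- Let `(M, F, V)` be the Dieudonné space of a BT₁ group scheme over a perfect field `k` of
characteristic `p`.  The smallest collection `C` of `k`-subspaces of `M` containing `0` and `M`
and closed under `N ↦ F(N)` (image under `F`) and `N ↦ V⁻¹(N)` (preimage under `V`) is finite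
and totally ordered by inclusion.  (The resulting chain is the canonical filtration of
`(M, F, V)`.) -/
theorem canonical_filtration_finite_chain (p : ℕ) [Fact p.Prime] (k : Type*) [Field k]
    [CharP k p] [PerfectRing k p] (M : Type*) [AddCommGroup M] [Module k M]
    [FiniteDimensional k M]
    (F : M →ₛₗ[frobenius k p] M)
    (V : M →ₛₗ[((frobeniusEquiv k p).symm : k →+* k)] M)
    (hFV : LinearMap.ker F = LinearMap.range V)
    (hVF : LinearMap.ker V = LinearMap.range F)
    (C : Set (Submodule k M))
    (hbot : ⊥ ∈ C) (htop : ⊤ ∈ C)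
    (hmapF : ∀ N ∈ C, N.map F ∈ C)
    (hcomapV : ∀ N ∈ C, N.comap V ∈ C)
    (hmin : ∀ D : Set (Submodule k M), ⊥ ∈ D → ⊤ ∈ D →
      (∀ N ∈ D, N.map F ∈ D) → (∀ N ∈ D, N.comap V ∈ D) → C ⊆ D) :
    C.Finite ∧ IsChain (· ≤ ·) C := by
  have hC : C ⊆ canonicalFiltration F V := hmin _ .bot .top (fun _ => .left) (fun _ => .right)
  exact (canonical_filtration_finite_chain_general hVF.ge).imp (·.subset hC) (·.mono hC)
end

section
/- For every k-subspace N ⊆ M one has F(N)^⊥ = V^{−1}(N^⊥). Consequently, the canonical filtration is self-dual: if N belongs to the smallest collection of subspaces of M containing 0 and M and closed under N ↦ F(N) and N ↦ V^{−1}(N), then N^⊥ also belongs to this collection. -/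
open Module

/-- For a bilinear form `B` and a subspace `N ⊆ M`, the orthogonal complement
`N^⊥ = {x ∈ M ∣ B x n = 0 for all n ∈ N}`. -/
def Submodule.perpB {k M : Type*} [Field k] [AddCommGroup M] [Module k M]
    (B : M →ₗ[k] M →ₗ[k] k) (N : Submodule k M) : Submodule k M where
  carrier := {x : M | ∀ n ∈ N, B x n = 0}
  add_mem' := by
    intro a b ha hb n hn
    simp [ha n hn, hb n hn]
  zero_mem' := by
    intro n hn
    simp
  smul_mem' := by
    intro c x hx n hn
    simp [hx n hn]

section Perp

variable {k M : Type*} [Field k] [AddCommGroup M] [Module k M] {B : M →ₗ[k] M →ₗ[k] k}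

theorem mem_perpB {N : Submodule k M} {x : M} : x ∈ N.perpB B ↔ ∀ n ∈ N, B x n = 0 :=
  Iff.rfl

theorem perpB_bot : (⊥ : Submodule k M).perpB B = ⊤ := by
  ext x
  simp [mem_perpB]

theorem perpB_top (hsep : B.SeparatingLeft) : (⊤ : Submodule k M).perpB B = ⊥ :=
  (Submodule.eq_bot_iff _).2 fun x hx => hsep x fun y => hx y trivial

theorem perpB_eq_orthogonal (hrefl : B.IsRefl) (N : Submodule k M) :
    N.perpB B = LinearMap.BilinForm.orthogonal B N := by
  ext x
  exact forall₂_congr fun _ _ => hrefl.eq_iff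

theorem perpB_perpB [FiniteDimensional k M] (hrefl : B.IsRefl) (hsep : B.SeparatingLeft)
    (N : Submodule k M) : (N.perpB B).perpB B = N := by
  rw [perpB_eq_orthogonal hrefl, perpB_eq_orthogonal hrefl]
  exact LinearMap.BilinForm.orthogonal_orthogonal
    (hrefl.nondegenerate_iff_separatingLeft.2 hsep) hrefl N

end Perp

section SemilinearAdjoint

variable {k k' M M' : Type*} [Field k] [Field k'] [AddCommGroup M] [Module k M]
  [AddCommGroup M'] [Module k' M'] {σ : k →+* k'} {τ : k' →+* k} [RingHomSurjective σ]
  {F : M →ₛₗ[σ] M'} {V : M' →ₛₗ[τ] M}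
  {B : M →ₗ[k] M →ₗ[k] k} {B' : M' →ₗ[k'] M' →ₗ[k'] k'}

theorem perpB_map_eq_comap_perpB (hrefl : B.IsRefl) (hrefl' : B'.IsRefl)
    (hadj : ∀ x y, B' (F x) y = σ (B x (V y))) (N : Submodule k M) :
    (N.map F).perpB B' = (N.perpB B).comap V := by
  have orthogonal_iff (x : M) (y : M') : B' y (F x) = 0 ↔ B (V y) x = 0 := by
    rw [hrefl'.eq_iff, hadj, map_eq_zero, hrefl.eq_iff]
  ext y
  simp only [mem_perpB, Submodule.mem_comap, Submodule.mem_map, forall_exists_index, and_imp,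
    forall_apply_eq_imp_iff₂, orthogonal_iff]

theorem perpB_comap_eq_map_perpB [FiniteDimensional k M] [FiniteDimensional k' M']
    (hrefl : B.IsRefl) (hrefl' : B'.IsRefl) (hsep : B.SeparatingLeft) (hsep' : B'.SeparatingLeft)
    (hadj : ∀ x y, B' (F x) y = σ (B x (V y))) (N : Submodule k M) :
    (N.comap V).perpB B' = (N.perpB B).map F :=
  calc (N.comap V).perpB B'
    _ = (((N.perpB B).perpB B).comap V).perpB B' := by rw [perpB_perpB hrefl hsep]
    _ = (((N.perpB B).map F).perpB B').perpB B' := by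
      rw [perpB_map_eq_comap_perpB hrefl hrefl' hadj]
    _ = (N.perpB B).map F := perpB_perpB hrefl' hsep' _

end SemilinearAdjoint

section CanonicalFiltration

variable {k M : Type*} [Field k] [AddCommGroup M] [Module k M] {σ τ : k →+* k}
  [RingHomSurjective σ]

/-- A collection of subspaces of `M` that contains `0` and `M` and is closed under
`N ↦ F(N)` and `N ↦ V⁻¹(N)`. -/
structure IsMapComapClosed (F : M →ₛₗ[σ] M) (V : M →ₛₗ[τ] M) (C : Set (Submodule k M)) :
    Prop where
  bot_mem : ⊥ ∈ C
  top_mem : ⊤ ∈ C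
  map_mem : ∀ N ∈ C, N.map F ∈ C
  comap_mem : ∀ N ∈ C, N.comap V ∈ C

/-- The predicate that `C` is the canonical filtration of `(M, F, V)`, encoded as the least
collection of subspaces that is closed in the sense of `IsMapComapClosed`. -/
def IsCanonicalFiltration (F : M →ₛₗ[σ] M) (V : M →ₛₗ[τ] M) (C : Set (Submodule k M)) : Prop :=
  IsLeast {D | IsMapComapClosed F V D} C

variable [FiniteDimensional k M] {F : M →ₛₗ[σ] M} {V : M →ₛₗ[τ] M} {B : M →ₗ[k] M →ₗ[k] k}

theorem IsMapComapClosed.preimage_perpB {C : Set (Submodule k M)} (hC : IsMapComapClosed F V C)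
    (hrefl : B.IsRefl) (hsep : B.SeparatingLeft) (hadj : ∀ x y, B (F x) y = σ (B x (V y))) :
    IsMapComapClosed F V (Submodule.perpB B ⁻¹' C) where
  bot_mem := by
    rw [Set.mem_preimage, perpB_bot]
    exact hC.top_mem
  top_mem := by
    rw [Set.mem_preimage, perpB_top hsep]
    exact hC.bot_mem
  map_mem N hN := by
    rw [Set.mem_preimage, perpB_map_eq_comap_perpB hrefl hrefl hadj]
    exact hC.comap_mem _ hN
  comap_mem N hN := by
    rw [Set.mem_preimage, perpB_comap_eq_map_perpB hrefl hrefl hsep hsep hadj]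
    exact hC.map_mem _ hN

theorem perp_map_eq_comap_perp_and_selfdual_general (hrefl : B.IsRefl) (hsep : B.SeparatingLeft)
    (hadj : ∀ x y, B (F x) y = σ (B x (V y))) :
    (∀ N : Submodule k M, (N.map F).perpB B = (N.perpB B).comap V) ∧
    ∀ C : Set (Submodule k M), IsCanonicalFiltration F V C → ∀ N ∈ C, N.perpB B ∈ C :=
  ⟨perpB_map_eq_comap_perpB hrefl hrefl hadj,
    fun _ hC _ hN => hC.2 (hC.1.preimage_perpB hrefl hsep hadj) hN⟩

end CanonicalFiltration

/-- Let `(M, F, V)` be the Dieudonné space of a principally quasi-polarized BT₁ group scheme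
over a perfect field `k` of characteristic `p`, with nondegenerate alternating form `B` on `M`
(of dimension `2g`) satisfying `B (F x) y = (B x (V y)) ^ p`.  Then for every `k`-subspace
`N ⊆ M` one has `F(N)^⊥ = V⁻¹(N^⊥)`.  Consequently, the canonical filtration is self-dual:
if `N` belongs to the smallest collection of subspaces of `M` containing `0` and `M` and
closed under `N ↦ F(N)` and `N ↦ V⁻¹(N)`, then so does `N^⊥`. -/
theorem perp_map_eq_comap_perp_and_selfdual (p : ℕ) [Fact p.Prime] (k : Type*) [Field k]
    [CharP k p] [PerfectRing k p] (g : ℕ) (M : Type*) [AddCommGroup M] [Module k M]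
    [FiniteDimensional k M] (hdim : finrank k M = 2 * g)
    (F : M →ₛₗ[frobenius k p] M)
    (V : M →ₛₗ[((frobeniusEquiv k p).symm : k →+* k)] M)
    (hFV : LinearMap.ker F = LinearMap.range V)
    (hVF : LinearMap.ker V = LinearMap.range F)
    (B : M →ₗ[k] M →ₗ[k] k)
    (halt : ∀ x, B x x = 0)
    (hnondeg : ∀ x, (∀ y, B x y = 0) → x = 0)
    (hcompat : ∀ x y, B (F x) y = (B x (V y)) ^ p) :
    (∀ N : Submodule k M, (N.map F).perpB B = (N.perpB B).comap V) ∧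
    ∀ C : Set (Submodule k M), ⊥ ∈ C → ⊤ ∈ C →
      (∀ N ∈ C, N.map F ∈ C) → (∀ N ∈ C, N.comap V ∈ C) →
      (∀ D : Set (Submodule k M), ⊥ ∈ D → ⊤ ∈ D →
        (∀ N ∈ D, N.map F ∈ D) → (∀ N ∈ D, N.comap V ∈ D) → C ⊆ D) →
      ∀ N ∈ C, N.perpB B ∈ C := by
  obtain ⟨hperp, hdual⟩ :=
    perp_map_eq_comap_perp_and_selfdual_general (LinearMap.IsAlt.isRefl halt) hnondeg hcompat
  exact ⟨hperp, fun C hbot htop hF hV hmin => hdual C ⟨⟨hbot, htop, hF, hV⟩,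
    fun D hD => hmin D hD.bot_mem hD.top_mem hD.map_mem hD.comap_mem⟩⟩
end

section
/- If k is algebraically closed, then there exists a final filtration of (M, F, V): a complete flag 0 = M_0 ⊂ M_1 ⊂ ⋯ ⊂ M_n = M of k-subspaces with dim_k M_j = j (where n = dim_k M) such that for every j there exist indices j′ and j″ with F(M_j) = M_{j′} and V^{−1}(M_j) = M_{j″}. -/
open Module

/-!
On subspaces, `F` and `V⁻¹` are monotone, their images lie in `[0, F(M)]` and `[F(M), M]`
respectively, and no interval `A < B` is collapsed by both. Take a maximal chain `C` from `0` to `M`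
with `C ⊆ F(C) ∪ V⁻¹(C)`. Maximality gives `C = F(C) ∪ V⁻¹(C)`, and counting shows that each gap of
`C` is collapsed by exactly one of `F` and `V⁻¹` and is carried by the other to a gap, so that `F`
and `V⁻¹` permute the gaps. This makes the sum of the graded pieces of `C` a space with an injective
Frobenius-semilinear endomorphism, and over an algebraically closed field its fixed vectors span it
(Lang). Given a gap, pick a fixed vector that is nonzero there: the lines spanned by its components
refine `C` to a chain of the same kind, so by maximality the gap is itself one-dimensional.
-/

section FrobeniusSemilinear

open Polynomial in
theorem exists_ne_zero_eval_eq_self {k : Type*} [Field k] [IsAlgClosed k] {P : k[X]}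
    (hP : P ≠ 0) (hX : X ^ 2 ∣ P) : ∃ s ≠ 0, P.eval s = s := by
  obtain ⟨Q, rfl⟩ := hX
  have hQ : Q ≠ 0 := right_ne_zero_of_mul hP
  have hdeg : 0 < (X * Q).degree :=
    natDegree_pos_iff_degree_pos.mp (by rw [natDegree_X_mul hQ]; omega)
  obtain ⟨s, hs⟩ := IsAlgClosed.exists_eval₂_eq_zero (RingHom.id k) (X * Q - C 1)
    (by rw [degree_sub_C hdeg]; exact hdeg.ne')
  have hsQ : s * Q.eval s = 1 := by simpa [eval₂_id, sub_eq_zero] using hs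
  refine ⟨s, left_ne_zero_of_mul_eq_one hsQ, ?_⟩
  rw [eval_mul, eval_pow, eval_X, pow_two, mul_assoc, hsQ, mul_one]

open Polynomial in
/-- The polynomials `Y 0 = 0`, `Y (i + 1) = (Y i + a i * X) ^ p`. If `Φ` is Frobenius-semilinear and
`Φ^[d] w = ∑ i < d, a i • Φ^[i] w`, then comparing coefficients in `Φ v = v` leads to the vectors
`v = ∑ i < d, (Y i + a i * X)(s) • Φ^[i] w`, fixed by `Φ` as soon as `Y d (s) = s`. -/
noncomputable def twistedHorner {k : Type*} [CommSemiring k] (p : ℕ) (a : ℕ → k) : ℕ → k[X]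
  | 0 => 0
  | i + 1 => (twistedHorner p a i + C (a i) * X) ^ p

namespace twistedHorner

open Polynomial

variable {k : Type*} {p : ℕ}

theorem X_sq_dvd [CommSemiring k] (hp : 2 ≤ p) (a : ℕ → k) (i : ℕ) :
    X ^ 2 ∣ twistedHorner p a i := by
  induction i with
  | zero => exact dvd_zero _
  | succ i ih =>
    have hX : X ∣ twistedHorner p a i + C (a i) * X :=
      dvd_add ((dvd_pow_self X two_ne_zero).trans ih) (dvd_mul_left X _)
    exact (pow_dvd_pow_of_dvd hX 2).trans (pow_dvd_pow _ hp)

theorem ne_zero [CommRing k] [IsDomain k] (hp : 2 ≤ p) {a : ℕ → k} {d : ℕ}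
    (ha : ∃ i < d, a i ≠ 0) : twistedHorner p a d ≠ 0 := by
  contrapose! ha
  induction d with
  | zero => simp
  | succ d ih =>
    have hsum : twistedHorner p a d + C (a d) * X = 0 := eq_zero_of_pow_eq_zero ha
    obtain ⟨Q, hQ⟩ := X_sq_dvd hp a d
    have had : a d = 0 := by
      simpa [hQ, coeff_X_pow_mul'] using congrArg (coeff · 1) hsum
    have hd : twistedHorner p a d = 0 := by simpa [had] using hsum
    exact Nat.forall_lt_succ_right.mpr ⟨ih hd, had⟩

end twistedHorner

theorem exists_linearIndepOn_range_and_eq_sum {k X : Type*} [DivisionRing k] [AddCommGroup X]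
    [Module k X] [FiniteDimensional k X] (u : ℕ → X) :
    ∃ (d : ℕ) (a : ℕ → k), LinearIndepOn k u (Finset.range d : Set ℕ) ∧
      ∑ i ∈ Finset.range d, a i • u i = u d := by
  have hdep : ∃ d, ¬ LinearIndepOn k u (Finset.range (d + 1) : Set ℕ) :=
    ⟨finrank k X, fun h => by simpa using h.linearIndependent.fintype_card_le_finrank⟩
  classical
  have hind : LinearIndepOn k u (Finset.range (Nat.find hdep) : Set ℕ) := by
    rcases h : Nat.find hdep with _ | d
    · simp
    · exact not_not.mp (Nat.find_min hdep (h ▸ d.lt_succ_self))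
  have hmem : u (Nat.find hdep) ∈ Submodule.span k (u '' Finset.range (Nat.find hdep)) := by
    have hsucc := Nat.find_spec hdep
    rw [Finset.range_add_one, Finset.coe_insert, linearIndepOn_insert (by simp)] at hsucc
    tauto
  obtain ⟨a, ha⟩ := Submodule.mem_span_image_finset_iff_exists_fun' k |>.mp hmem
  exact ⟨_, a, hind, ha⟩

open Polynomial in
theorem exists_pow_sub_self_eq {k : Type*} [Field k] [IsAlgClosed k] {n : ℕ} (hn : 1 < n) (b : k) :
    ∃ c : k, c ^ n - c = b := by
  have hlt : (X + C b).degree < (X ^ n : k[X]).degree := by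
    rw [degree_X_add_C, degree_X_pow]
    exact_mod_cast hn
  obtain ⟨c, hc⟩ := IsAlgClosed.exists_root (X ^ n - (X + C b)) (by
    rw [degree_sub_eq_left_of_degree_lt hlt, degree_X_pow]
    exact_mod_cast (zero_lt_one.trans hn).ne')
  refine ⟨c, ?_⟩
  simpa [sub_add_eq_sub_sub, sub_eq_zero] using hc

variable {p : ℕ} [Fact p.Prime] {k : Type*} [Field k] [CharP k p] [IsAlgClosed k]
  {X : Type*} [AddCommGroup X] [Module k X]

theorem exists_apply_sub_eq_of_mem_span_fixed (Φ : X →ₛₗ[frobenius k p] X) {y : X}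
    (hy : y ∈ Submodule.span k {x | Φ x = x}) :
    ∃ z ∈ Submodule.span k {x | Φ x = x}, Φ z - z = y := by
  induction hy using Submodule.closure_induction with
  | zero => exact ⟨0, zero_mem _, by simp⟩
  | add y₁ y₂ _ _ h₁ h₂ =>
    obtain ⟨z₁, hz₁, rfl⟩ := h₁
    obtain ⟨z₂, hz₂, rfl⟩ := h₂
    exact ⟨z₁ + z₂, add_mem hz₁ hz₂, by rw [map_add]; abel⟩
  | smul_mem b x hx =>
    obtain ⟨c, hc⟩ := exists_pow_sub_self_eq (Fact.out : p.Prime).one_lt b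
    refine ⟨c • x, Submodule.smul_mem _ c (Submodule.subset_span hx), ?_⟩
    rw [map_smulₛₗ, frobenius_def, hx, ← sub_smul, hc]

theorem mem_span_fixed_of_apply_mem {Φ : X →ₛₗ[frobenius k p] X} (hΦ : Function.Injective Φ) {x : X}
    (hx : Φ x ∈ Submodule.span k {x | Φ x = x}) : x ∈ Submodule.span k {x | Φ x = x} := by
  have : RingHomSurjective (frobenius k p) := ⟨surjective_frobenius k p⟩
  have himage : Φ '' {x | Φ x = x} = {x | Φ x = x} :=
    (Set.image_congr fun _ h => h).trans (Set.image_id' _)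
  rw [← himage, ← Submodule.map_span] at hx
  obtain ⟨z, hz, hzx⟩ := hx
  exact hΦ hzx ▸ hz

variable [FiniteDimensional k X]

theorem exists_ne_zero_apply_eq_self [Nontrivial X] {Φ : X →ₛₗ[frobenius k p] X}
    (hΦ : Function.Injective Φ) : ∃ v ≠ 0, Φ v = v := by
  obtain ⟨w, hw⟩ := exists_ne (0 : X)
  obtain ⟨d, a, hind, hsum⟩ :=
    exists_linearIndepOn_range_and_eq_sum (k := k) fun i => Φ^[i] w
  have hiter (i : ℕ) : Φ^[i] w ≠ 0 := fun h =>
    hw (hΦ.iterate i (h.trans (Function.iterate_fixed (map_zero Φ) i).symm))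
  have ha : ∃ i < d, a i ≠ 0 := by
    by_contra! ha
    exact hiter d (hsum ▸ Finset.sum_eq_zero fun i hi => by
      rw [ha i (Finset.mem_range.mp hi), zero_smul])
  have hp : 2 ≤ p := (Fact.out : p.Prime).two_le
  obtain ⟨s, hs, hfix⟩ := exists_ne_zero_eval_eq_self
    (twistedHorner.ne_zero hp ha) (twistedHorner.X_sq_dvd hp a d)
  let y (i : ℕ) : k := (twistedHorner p a i).eval s
  have hysucc (i : ℕ) : y (i + 1) = (y i + a i * s) ^ p := by simp [y, twistedHorner]
  refine ⟨∑ i ∈ Finset.range d, (y i + a i * s) • Φ^[i] w, fun hv => ?_, ?_⟩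
  · obtain ⟨m, rfl⟩ : ∃ m, d = m + 1 := Nat.exists_eq_succ_of_ne_zero (by grind)
    have hm := linearIndepOn_finset_iff.mp hind _ hv m (Finset.self_mem_range_succ m)
    refine hs ?_
    rw [← hfix]
    change y (m + 1) = 0
    rw [hysucc, hm, zero_pow (by omega)]
  · have hy0 : y 0 = 0 := by simp [y, twistedHorner]
    calc Φ (∑ i ∈ Finset.range d, (y i + a i * s) • Φ^[i] w)
        = ∑ i ∈ Finset.range d, y (i + 1) • Φ^[i + 1] w := by
          simp only [map_sum, map_smulₛₗ, frobenius_def, hysucc, Function.iterate_succ_apply']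
      _ = ∑ i ∈ Finset.range d, y i • Φ^[i] w + s • Φ^[d] w := by
          have := Finset.sum_range_succ' (fun i => y i • Φ^[i] w) d
          rw [Finset.sum_range_succ, hy0, zero_smul, add_zero] at this
          rw [← this, show y d = s from hfix]
      _ = _ := by
          simp only [← hsum, Finset.smul_sum, add_smul, Finset.sum_add_distrib, mul_comm _ s,
            mul_smul]

theorem span_fixed_eq_top {Φ : X →ₛₗ[frobenius k p] X} (hΦ : Function.Injective Φ) :
    Submodule.span k {x | Φ x = x} = ⊤ := by
  set W := Submodule.span k {x | Φ x = x}
  have hWΦ : W ≤ W.comap Φ := Submodule.span_le.mpr fun x hx =>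
    Submodule.subset_span (show Φ (Φ x) = Φ x from congrArg Φ hx)
  by_contra hW
  have : Nontrivial (X ⧸ W) := Submodule.Quotient.nontrivial_iff.mpr hW
  have hinj : Function.Injective (W.mapQ W Φ hWΦ) := by
    rw [injective_iff_map_eq_zero]
    rintro ⟨x⟩ hx
    exact (Submodule.Quotient.mk_eq_zero W).mpr
      (mem_span_fixed_of_apply_mem hΦ ((Submodule.Quotient.mk_eq_zero W).mp hx))
  obtain ⟨⟨x⟩, hx0, hxfix⟩ := exists_ne_zero_apply_eq_self hinj
  obtain ⟨z, hz, hzx⟩ :=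
    exists_apply_sub_eq_of_mem_span_fixed Φ ((Submodule.Quotient.eq W).mp hxfix)
  have hfix : x - z ∈ W := Submodule.subset_span (by
    rw [Set.mem_ofPred_eq, map_sub, sub_eq_sub_iff_sub_eq_sub, hzx])
  exact hx0 ((Submodule.Quotient.mk_eq_zero W).mpr ((W.sub_mem_iff_left hz).mp hfix))

end FrobeniusSemilinear

section CanonicalPair

/-- One of `φ` and `ψ` takes the pair `a, b` to the pair `a', b'`, and the other one identifies `a`
with `b`: this is how the gaps `a < b` and `a' < b'` of a stable chain correspond. -/
def IsTransition {α : Type*} (φ ψ : α → α) (a b a' b' : α) : Prop :=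
  (φ a = a' ∧ φ b = b' ∧ ψ a = ψ b) ∨ (ψ a = a' ∧ ψ b = b' ∧ φ a = φ b)

theorem apply_succ_eq_add_one_of_strictMono {r : ℕ} {h : Fin (r + 1) → ℕ} (hh : StrictMono h)
    (hlast : h (Fin.last r) ≤ h 0 + r) (i : Fin r) : h i.succ = h i.castSucc + 1 := by
  have hmono : Monotone fun j : Fin (r + 1) => (h j : ℤ) - (j : ℕ) :=
    Fin.monotone_iff_le_succ.mpr fun i => by
      have := hh i.castSucc_lt_succ
      simp only [Fin.val_castSucc, Fin.val_succ]
      omega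
  have hlower := hmono (Fin.zero_le i.castSucc)
  have hupper := hmono (Fin.le_last i.succ)
  have := hh i.castSucc_lt_succ
  simp only [Fin.val_castSucc, Fin.val_succ, Fin.val_zero, Fin.val_last] at hlower hupper
  omega

theorem exists_castSucc_eq_and_succ_eq {r : ℕ} {x y : Fin (r + 1)} (hxy : (y : ℕ) = x + 1) :
    ∃ i : Fin r, i.castSucc = x ∧ i.succ = y :=
  ⟨⟨x, by omega⟩, rfl, Fin.ext hxy.symm⟩

section Preorder

variable {α : Type*} [Preorder α]

theorem isChain_range_union_range {r : ℕ} {c : Fin (r + 1) → α} {N : Fin r → α}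
    (hc : Monotone c) (hcN : ∀ i, c i.castSucc ≤ N i) (hNc : ∀ i, N i ≤ c i.succ) :
    IsChain (· ≤ ·) (Set.range c ∪ Set.range N) := by
  have hlt {i j : Fin r} (h : i < j) : N i ≤ N j :=
    (hNc i).trans ((hc (Fin.succ_le_castSucc_iff.mpr h)).trans (hcN j))
  have hcomp (j : Fin (r + 1)) (i : Fin r) : c j ≤ N i ∨ N i ≤ c j := by
    rcases le_or_gt j i.castSucc with h | h
    · exact .inl ((hc h).trans (hcN i))
    · exact .inr ((hNc i).trans (hc (Fin.castSucc_lt_iff_succ_le.mp h)))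
  rintro _ (⟨i, rfl⟩ | ⟨i, rfl⟩) _ (⟨j, rfl⟩ | ⟨j, rfl⟩) hne
  · exact (le_total i j).imp (hc ·) (hc ·)
  · exact hcomp i j
  · exact (hcomp j i).symm
  · exact (lt_or_gt_of_ne (ne_of_apply_ne N hne)).imp hlt hlt

theorem eq_castSucc_or_eq_succ_of_mem_range {r : ℕ} {c : Fin (r + 1) → α} (hc : StrictMono c)
    {i : Fin r} {a : α} (hle : c i.castSucc ≤ a) (hge : a ≤ c i.succ) (ha : a ∈ Set.range c) :
    a = c i.castSucc ∨ a = c i.succ := by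
  obtain ⟨j, rfl⟩ := ha
  rcases (hc.le_iff_le.mp hle).eq_or_lt with h | h
  · exact .inl (congrArg c h.symm)
  · exact .inr (congrArg c ((hc.le_iff_le.mp hge).antisymm (Fin.castSucc_lt_iff_succ_le.mp h)))

end Preorder

variable {α : Type*} [PartialOrder α]

theorem exists_strictMono_range_eq [WellFoundedLT α] [WellFoundedGT α] {C : Set α}
    (hC : IsChain (· ≤ ·) C) (hne : C.Nonempty) :
    ∃ (r : ℕ) (c : Fin (r + 1) → α), StrictMono c ∧ Set.range c = C := by
  classical
  let : LinearOrder C := hC.linearOrder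
  have : Finite C := Finite.of_wellFoundedLT_wellFoundedGT C
  let := Fintype.ofFinite C
  have := hne.to_subtype
  obtain ⟨r, hr⟩ := Nat.exists_eq_succ_of_ne_zero (Fintype.card_ne_zero (α := C))
  let e : Fin (r + 1) ≃o C := Fintype.orderIsoFinOfCardEq C hr
  refine ⟨r, fun j => e j, fun _ _ h => e.strictMono h, ?_⟩
  exact (e.surjective.range_comp Subtype.val).trans Subtype.range_coe

theorem apply_zero_eq_bot [OrderBot α] {r : ℕ} {c : Fin (r + 1) → α} (hc : Monotone c)
    (hbot : ⊥ ∈ Set.range c) : c 0 = ⊥ := by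
  obtain ⟨j, hj⟩ := hbot
  exact eq_bot_mono (hc (Fin.zero_le j)) hj

theorem apply_last_eq_top [OrderTop α] {r : ℕ} {c : Fin (r + 1) → α} (hc : Monotone c)
    (htop : ⊤ ∈ Set.range c) : c (Fin.last r) = ⊤ := by
  obtain ⟨j, hj⟩ := htop
  exact eq_top_mono (hc (Fin.le_last j)) hj

variable [BoundedOrder α] {φ ψ : α → α}

/-- The properties of the pair `N ↦ F(N)`, `N ↦ V⁻¹(N)` on the lattice of subspaces of a
Dieudonné space: `φ` maps `[⊥, ⊤]` to `[⊥, φ ⊤]`, `ψ` maps it to `[φ ⊤, ⊤]`, and no nontrivial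
interval is collapsed by both. -/
structure IsCanonicalPair (φ ψ : α → α) : Prop where
  monotone_left : Monotone φ
  monotone_right : Monotone ψ
  left_bot : φ ⊥ = ⊥
  right_top : ψ ⊤ = ⊤
  left_top : φ ⊤ = ψ ⊥
  eq_of_le : ∀ {a b}, a ≤ b → φ a = φ b → ψ a = ψ b → a = b

/-- A chain from `⊥` to `⊤` each of whose members is the image of a member under `φ` or `ψ`. This
is the condition imposed in the search for a chain stable under `φ` and `ψ`: it passes from `C` to
the larger set `φ '' C ∪ ψ '' C`, so a maximal such `C` equals `φ '' C ∪ ψ '' C`. -/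
structure IsBackwardStableChain (φ ψ : α → α) (C : Set α) : Prop where
  isChain : IsChain (· ≤ ·) C
  bot_mem : ⊥ ∈ C
  top_mem : ⊤ ∈ C
  subset_image : C ⊆ φ '' C ∪ ψ '' C

theorem eq_castSucc_or_eq_succ_of_maximal {r : ℕ} {c : Fin (r + 1) → α} {N : Fin r → α}
    (hc : StrictMono c) (hmax : Maximal (IsBackwardStableChain φ ψ) (Set.range c))
    (hcN : ∀ i, c i.castSucc ≤ N i) (hNc : ∀ i, N i ≤ c i.succ)
    (hN : ∀ i, ∃ j, φ (N j) = N i ∨ ψ (N j) = N i) (i : Fin r) :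
    N i = c i.castSucc ∨ N i = c i.succ := by
  have hrefined : IsBackwardStableChain φ ψ (Set.range c ∪ Set.range N) := {
    isChain := isChain_range_union_range hc.monotone hcN hNc
    bot_mem := .inl hmax.prop.bot_mem
    top_mem := .inl hmax.prop.top_mem
    subset_image := by
      refine Set.union_subset (hmax.prop.subset_image.trans ?_) ?_
      · gcongr <;> exact Set.subset_union_left
      · rintro _ ⟨i, rfl⟩
        obtain ⟨j, hj⟩ := hN i
        exact hj.imp (fun hj => ⟨N j, .inr ⟨j, rfl⟩, hj⟩) fun hj => ⟨N j, .inr ⟨j, rfl⟩, hj⟩ }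
  exact eq_castSucc_or_eq_succ_of_mem_range hc (hcN i) (hNc i)
    (hmax.le_of_ge hrefined Set.subset_union_left (.inr ⟨i, rfl⟩))

theorem IsBackwardStableChain.sUnion {S : Set (Set α)}
    (hS : ∀ C ∈ S, IsBackwardStableChain φ ψ C) (hchain : IsChain (· ⊆ ·) S) (hne : S.Nonempty) :
    IsBackwardStableChain φ ψ (⋃₀ S) where
  isChain := (Set.pairwise_sUnion hchain.directedOn).mpr fun C hC => (hS C hC).isChain
  bot_mem := hne.imp fun C hC => ⟨hC, (hS C hC).bot_mem⟩
  top_mem := hne.imp fun C hC => ⟨hC, (hS C hC).top_mem⟩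
  subset_image := Set.sUnion_subset fun C hC => (hS C hC).subset_image.trans <|
    Set.union_subset_union (Set.image_mono (Set.subset_sUnion_of_mem hC))
      (Set.image_mono (Set.subset_sUnion_of_mem hC))

namespace IsCanonicalPair

theorem left_le_right (h : IsCanonicalPair φ ψ) (a b : α) : φ a ≤ ψ b :=
  calc φ a ≤ φ ⊤ := h.monotone_left le_top
    _ = ψ ⊥ := h.left_top
    _ ≤ ψ b := h.monotone_right bot_le

theorem isBackwardStableChain_pair (h : IsCanonicalPair φ ψ) :
    IsBackwardStableChain φ ψ {⊥, ⊤} where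
  isChain := IsChain.pair bot_le
  bot_mem := Set.mem_insert _ _
  top_mem := Set.mem_insert_of_mem _ rfl
  subset_image := by
    rintro _ (rfl | rfl)
    · exact .inl ⟨⊥, Set.mem_insert _ _, h.left_bot⟩
    · exact .inr ⟨⊤, Set.mem_insert_of_mem _ rfl, h.right_top⟩

theorem isChain_image_union_image (h : IsCanonicalPair φ ψ) {C : Set α}
    (hC : IsChain (· ≤ ·) C) : IsChain (· ≤ ·) (φ '' C ∪ ψ '' C) := by
  rintro _ (⟨a, ha, rfl⟩ | ⟨a, ha, rfl⟩) _ (⟨b, hb, rfl⟩ | ⟨b, hb, rfl⟩) -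
  · exact (hC.total ha hb).imp (h.monotone_left ·) (h.monotone_left ·)
  · exact .inl (h.left_le_right a b)
  · exact .inr (h.left_le_right b a)
  · exact (hC.total ha hb).imp (h.monotone_right ·) (h.monotone_right ·)

theorem isBackwardStableChain_image_union_image (h : IsCanonicalPair φ ψ) {C : Set α}
    (hC : IsBackwardStableChain φ ψ C) : IsBackwardStableChain φ ψ (φ '' C ∪ ψ '' C) where
  isChain := h.isChain_image_union_image hC.isChain
  bot_mem := hC.subset_image hC.bot_mem
  top_mem := hC.subset_image hC.top_mem
  subset_image :=
    Set.union_subset_union (Set.image_mono hC.subset_image) (Set.image_mono hC.subset_image)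

theorem image_union_image_eq_of_maximal (h : IsCanonicalPair φ ψ) {C : Set α}
    (hC : Maximal (IsBackwardStableChain φ ψ) C) : φ '' C ∪ ψ '' C = C :=
  (hC.eq_of_subset (h.isBackwardStableChain_image_union_image hC.prop) hC.prop.subset_image).symm

theorem exists_maximal_isBackwardStableChain (h : IsCanonicalPair φ ψ) :
    ∃ C, Maximal (IsBackwardStableChain φ ψ) C := by
  obtain ⟨C, -, hC⟩ := zorn_subset_nonempty {C | IsBackwardStableChain φ ψ C}
    (fun S hS hchain hne =>
      ⟨⋃₀ S, .sUnion (fun _ hC => hS hC) hchain hne, fun _ => Set.subset_sUnion_of_mem⟩)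
    _ h.isBackwardStableChain_pair
  exact ⟨C, hC⟩

theorem exists_maximal_range [WellFoundedLT α] [WellFoundedGT α] (h : IsCanonicalPair φ ψ) :
    ∃ (r : ℕ) (c : Fin (r + 1) → α),
      StrictMono c ∧ Maximal (IsBackwardStableChain φ ψ) (Set.range c) := by
  obtain ⟨C, hC⟩ := h.exists_maximal_isBackwardStableChain
  obtain ⟨r, c, hc, rfl⟩ := exists_strictMono_range_eq hC.prop.isChain ⟨⊥, hC.prop.bot_mem⟩
  exact ⟨r, c, hc, hC⟩

section Enumeration

variable {r : ℕ} {c : Fin (r + 1) → α}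

theorem exists_transition (h : IsCanonicalPair φ ψ) (hc : StrictMono c)
    (hbot : c 0 = ⊥) (htop : c (Fin.last r) = ⊤) {f g : Fin (r + 1) → Fin (r + 1)}
    (hf : ∀ j, φ (c j) = c (f j)) (hg : ∀ j, ψ (c j) = c (g j)) (i : Fin r) :
    ∃ i' : Fin r, IsTransition φ ψ (c i.castSucc) (c i.succ) (c i'.castSucc) (c i'.succ) := by
  have hfmono : Monotone f := fun a b hab =>
    hc.le_iff_le.mp (hf a ▸ hf b ▸ h.monotone_left (hc.monotone hab))
  have hgmono : Monotone g := fun a b hab =>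
    hc.le_iff_le.mp (hg a ▸ hg b ▸ h.monotone_right (hc.monotone hab))
  have hstrict : StrictMono fun j => (f j : ℕ) + g j := fun a b hab => by
    have hfg : f a = f b → g a ≠ g b := fun hfab hgab => hab.ne <| hc.injective <|
      h.eq_of_le (hc.monotone hab.le) (by rw [hf, hf, hfab]) (by rw [hg, hg, hgab])
    have := hfmono hab.le
    have := hgmono hab.le
    grind
  have hf0 : f 0 = 0 := hc.injective (by rw [← hf, hbot, h.left_bot])
  have hglast : g (Fin.last r) = Fin.last r := hc.injective (by rw [← hg, htop, h.right_top])
  have hflast : f (Fin.last r) = g 0 := hc.injective (by rw [← hf, ← hg, htop, hbot, h.left_top])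
  have hsum := apply_succ_eq_add_one_of_strictMono hstrict (by simp [hf0, hglast, hflast]) i
  have hf_le := hfmono i.castSucc_le_succ
  have hg_le := hgmono i.castSucc_le_succ
  rw [Fin.le_def] at hf_le hg_le
  rcases hf_le.eq_or_lt with hfi | hfi
  · obtain ⟨i', hcast, hsucc⟩ := exists_castSucc_eq_and_succ_eq
      (show (g i.succ : ℕ) = g i.castSucc + 1 by omega)
    exact ⟨i', .inr ⟨by rw [hg, hcast], by rw [hg, hsucc], by rw [hf, hf, Fin.ext hfi]⟩⟩
  · obtain ⟨i', hcast, hsucc⟩ := exists_castSucc_eq_and_succ_eq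
      (show (f i.succ : ℕ) = f i.castSucc + 1 by omega)
    have hgi : g i.castSucc = g i.succ := by omega
    exact ⟨i', .inl ⟨by rw [hf, hcast], by rw [hf, hsucc], by rw [hg, hg, hgi]⟩⟩

theorem eq_of_transition (h : IsCanonicalPair φ ψ) (hc : StrictMono c) {i j i' : Fin r}
    (hi : IsTransition φ ψ (c i.castSucc) (c i.succ) (c i'.castSucc) (c i'.succ))
    (hj : IsTransition φ ψ (c j.castSucc) (c j.succ) (c i'.castSucc) (c i'.succ)) : i = j := by
  have hgap : ¬ c i'.succ ≤ c i'.castSucc := (hc i'.castSucc_lt_succ).not_ge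
  wlog hij : i < j generalizing i j
  · exact (not_lt.mp hij).eq_or_lt.elim Eq.symm fun hji => (this hj hi hji).symm
  have hle : c i.succ ≤ c j.castSucc := hc.monotone (Fin.succ_le_castSucc_iff.mpr hij)
  refine absurd ?_ hgap
  rcases hi with ⟨-, hib, -⟩ | ⟨hia, hib, -⟩ <;> rcases hj with ⟨hja, hjb, -⟩ | ⟨hja, -, -⟩
  · exact hib ▸ hja ▸ h.monotone_left hle
  · exact hib ▸ hja ▸ h.left_le_right _ _
  · exact hjb ▸ hia ▸ h.left_le_right _ _
  · exact hib ▸ hja ▸ h.monotone_right hle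

theorem exists_left_eq (h : IsCanonicalPair φ ψ)
    (hmax : Maximal (IsBackwardStableChain φ ψ) (Set.range c)) (j : Fin (r + 1)) :
    ∃ j', φ (c j) = c j' := by
  have hmem : φ (c j) ∈ Set.range c := h.image_union_image_eq_of_maximal hmax ▸
    Set.mem_union_left _ (Set.mem_image_of_mem φ (Set.mem_range_self j))
  exact hmem.imp fun _ => Eq.symm

theorem exists_right_eq (h : IsCanonicalPair φ ψ)
    (hmax : Maximal (IsBackwardStableChain φ ψ) (Set.range c)) (j : Fin (r + 1)) :
    ∃ j', ψ (c j) = c j' := by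
  have hmem : ψ (c j) ∈ Set.range c := h.image_union_image_eq_of_maximal hmax ▸
    Set.mem_union_right _ (Set.mem_image_of_mem ψ (Set.mem_range_self j))
  exact hmem.imp fun _ => Eq.symm

theorem exists_perm_transition (h : IsCanonicalPair φ ψ) (hc : StrictMono c)
    (hmax : Maximal (IsBackwardStableChain φ ψ) (Set.range c)) :
    ∃ e : Equiv.Perm (Fin r), ∀ i,
      IsTransition φ ψ (c (e i).castSucc) (c (e i).succ) (c i.castSucc) (c i.succ) := by
  choose f hf using h.exists_left_eq hmax
  choose g hg using h.exists_right_eq hmax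
  choose t ht using h.exists_transition hc (apply_zero_eq_bot hc.monotone hmax.prop.bot_mem)
    (apply_last_eq_top hc.monotone hmax.prop.top_mem) hf hg
  have hinj : Function.Injective t := fun i j hij => h.eq_of_transition hc (ht i) (hij ▸ ht j)
  let e := Equiv.ofBijective t (Finite.injective_iff_bijective.mp hinj)
  exact ⟨e.symm, fun i => by simpa [e, Equiv.ofBijective_apply_symm_apply] using ht (e.symm i)⟩

end Enumeration

end IsCanonicalPair

end CanonicalPair

section Subquotient

open Submodule

section InducedMap

variable {R R₂ M M₂ : Type*} [Ring R] [Ring R₂] [AddCommGroup M] [Module R M]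
  [AddCommGroup M₂] [Module R₂ M₂]

theorem span_singleton_sup_eq_of_sub_mem {A : Submodule R M} {x y : M} (h : x - y ∈ A) :
    span R {x} ⊔ A = span R {y} ⊔ A := by
  have hle {x y : M} (h : x - y ∈ A) : span R {x} ⊔ A ≤ span R {y} ⊔ A := by
    refine sup_le ((span_singleton_le_iff_mem _ _).mpr ?_) le_sup_right
    exact mem_sup.mpr ⟨y, mem_span_singleton_self y, x - y, h, add_sub_cancel y x⟩
  exact (hle h).antisymm (hle (sub_mem_comm_iff.mp h))

variable {σ : R →+* R₂} {A B : Submodule R M} {A' B' : Submodule R₂ M₂}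

theorem map_span_singleton_sup [RingHomSurjective σ] {f : M →ₛₗ[σ] M₂} {x : M} {y : M₂}
    (hxy : f x - y ∈ A.map f) : (span R {x} ⊔ A).map f = span R₂ {y} ⊔ A.map f := by
  rw [Submodule.map_sup, map_span, Set.image_singleton, span_singleton_sup_eq_of_sub_mem hxy]

theorem comap_span_singleton_sup [RingHomSurjective σ] {f : M →ₛₗ[σ] M₂} {x : M} {y : M₂}
    (hxy : y - f x ∈ A') : (span R₂ {y} ⊔ A').comap f = span R {x} ⊔ A'.comap f := by
  have hspan : span R₂ {y} ⊔ A' = (span R {x} ⊔ A'.comap f).map f ⊔ A' := by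
    rw [span_singleton_sup_eq_of_sub_mem hxy, Submodule.map_sup, map_span, Set.image_singleton,
      sup_assoc, sup_eq_right.mpr (map_comap_le f A')]
  rw [hspan, comap_map_sup_of_comap_le le_sup_right]

/-- The quotient `B / A` of submodules `A ≤ B`, written so as to make sense without `A ≤ B`. -/
abbrev Subquotient (A B : Submodule R M) : Type _ := B ⧸ A.submoduleOf B

theorem subquotient_mk_eq_mk {x y : B} :
    (Submodule.Quotient.mk x : Subquotient A B) = Submodule.Quotient.mk y ↔ (x : M) - y ∈ A :=
  Submodule.Quotient.eq _

theorem subquotient_mk_eq_zero {x : B} :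
    (Submodule.Quotient.mk x : Subquotient A B) = 0 ↔ (x : M) ∈ A :=
  Submodule.Quotient.mk_eq_zero _

/-- The map `B / A → B' / A'` induced by a semilinear map that takes `A` into `A'` and `B` into
`B'`. -/
def subquotientMap (f : M →ₛₗ[σ] M₂) (hA : A ≤ A'.comap f) (hB : B ≤ B'.comap f) :
    Subquotient A B →ₛₗ[σ] Subquotient A' B' :=
  mapQ _ _ (f.restrict hB) fun _ hx => hA (mem_comap.mp hx)

theorem subquotientMap_injective {f : M →ₛₗ[σ] M₂} (hA : A ≤ A'.comap f)
    (hB : B ≤ B'.comap f) (h : ∀ x ∈ B, f x ∈ A' → x ∈ A) :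
    Function.Injective (subquotientMap f hA hB) := by
  rw [injective_iff_map_eq_zero]
  rintro ⟨x⟩ hx
  exact subquotient_mk_eq_zero.mpr (h x x.2 (subquotient_mk_eq_zero.mp hx))

end InducedMap

variable {R M : Type*} [Ring R] [AddCommGroup M] [Module R M] {A B A' B' : Submodule R M}
  {σ σ' : R →+* R} {F : M →ₛₗ[σ] M} {V : M →ₛₗ[σ'] M}

section RingHomSurjective

variable [RingHomSurjective σ] [RingHomSurjective σ']

theorem exists_apply_add_eq_of_apply_mem_map (hFV : LinearMap.ker F = LinearMap.range V) {x : M}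
    (hx : F x ∈ A.map F) : ∃ y, ∃ a ∈ A, V y + a = x := by
  obtain ⟨a, ha, hFa⟩ := hx
  have hker : x - a ∈ LinearMap.ker F := LinearMap.sub_mem_ker_iff.mpr hFa.symm
  rw [hFV] at hker
  obtain ⟨y, hy⟩ := hker
  exact ⟨y, a, ha, by rw [hy, sub_add_cancel]⟩

theorem mem_of_apply_mem_map (hFV : LinearMap.ker F = LinearMap.range V) (hAB : A ≤ B)
    (hV : A.comap V = B.comap V) {x : M} (hxB : x ∈ B) (hx : F x ∈ A.map F) : x ∈ A := by
  obtain ⟨y, a, ha, rfl⟩ := exists_apply_add_eq_of_apply_mem_map hFV hx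
  have hy : y ∈ B.comap V := (B.add_mem_iff_left (hAB ha)).mp hxB
  exact A.add_mem (hV ▸ hy : y ∈ A.comap V) ha

theorem isCanonicalPair_map_comap (hFV : LinearMap.ker F = LinearMap.range V)
    (hVF : LinearMap.ker V = LinearMap.range F) :
    IsCanonicalPair (Submodule.map F) (Submodule.comap V) where
  monotone_left _ _ := map_mono
  monotone_right _ _ := comap_mono
  left_bot := Submodule.map_bot F
  right_top := comap_top V
  left_top := by rw [Submodule.map_top, comap_bot, hVF]
  eq_of_le hAB hF hV :=
    hAB.antisymm fun _ hx => mem_of_apply_mem_map hFV hAB hV hx (hF ▸ mem_map_of_mem hx)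

end RingHomSurjective

variable [RingHomInvPair σ σ'] [RingHomInvPair σ' σ]

theorem subquotientMap_bijective_of_map_eq (hFV : LinearMap.ker F = LinearMap.range V)
    (hAB : A ≤ B) (hF : A.map F = B.map F) :
    Function.Bijective (subquotientMap V (le_refl (A.comap V)) (le_refl (B.comap V))) := by
  refine ⟨subquotientMap_injective _ _ fun _ _ h => h, ?_⟩
  rintro ⟨x⟩
  obtain ⟨y, a, ha, hx⟩ :=
    exists_apply_add_eq_of_apply_mem_map hFV (hF ▸ mem_map_of_mem x.2 : F x ∈ A.map F)
  have hy : V y ∈ B := (B.add_mem_iff_left (hAB ha)).mp (hx ▸ x.2)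
  refine ⟨Submodule.Quotient.mk ⟨y, hy⟩, subquotient_mk_eq_mk.mpr ?_⟩
  change V y - x ∈ A
  rwa [← hx, sub_add_cancel_left, neg_mem_iff]

theorem exists_injective_of_isTransition (hFV : LinearMap.ker F = LinearMap.range V) (hAB : A ≤ B)
    (h : IsTransition (Submodule.map F) (Submodule.comap V) A B A' B') :
    ∃ φ : Subquotient A B →ₛₗ[σ] Subquotient A' B', Function.Injective φ ∧
      ∀ (x : B) (x' : B'), φ (Submodule.Quotient.mk x) = Submodule.Quotient.mk x' →
        (span R {(x : M)} ⊔ A).map F = span R {(x' : M)} ⊔ A' ∨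
          (span R {(x : M)} ⊔ A).comap V = span R {(x' : M)} ⊔ A' := by
  rcases h with ⟨rfl, rfl, hV⟩ | ⟨rfl, rfl, hF⟩
  · refine ⟨subquotientMap F (le_comap_map F A) (le_comap_map F B),
      subquotientMap_injective _ _ fun x hxB hx => mem_of_apply_mem_map hFV hAB hV hxB hx,
      fun x x' hxx' => .inl (map_span_singleton_sup ?_)⟩
    exact subquotient_mk_eq_mk.mp hxx'
  · let φ := (LinearEquiv.ofBijective _ (subquotientMap_bijective_of_map_eq hFV hAB hF)).symm
    refine ⟨φ, φ.injective, fun x x' hxx' => .inr (comap_span_singleton_sup ?_)⟩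
    exact subquotient_mk_eq_mk.mp ((LinearEquiv.symm_apply_eq _).mp hxx')

end Subquotient

section Frobenius

variable {p : ℕ} [Fact p.Prime] {k : Type*} [Field k] [CharP k p]

instance ringHomInvPair_frobenius_frobeniusEquiv_symm [PerfectRing k p] :
    RingHomInvPair (frobenius k p) ((frobeniusEquiv k p).symm : k →+* k) :=
  RingHomInvPair.of_ringEquiv (frobeniusEquiv k p)

instance ringHomInvPair_frobeniusEquiv_symm_frobenius [PerfectRing k p] :
    RingHomInvPair ((frobeniusEquiv k p).symm : k →+* k) (frobenius k p) :=
  RingHomInvPair.of_ringEquiv (frobeniusEquiv k p).symm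

theorem exists_fixed_family_apply_ne_zero [IsAlgClosed k] {ι : Type*} [Finite ι] {X : ι → Type*}
    [∀ i, AddCommGroup (X i)] [∀ i, Module k (X i)] [∀ i, FiniteDimensional k (X i)] {e : ι → ι}
    (he : Function.Surjective e) {φ : ∀ i, X (e i) →ₛₗ[frobenius k p] X i}
    (hφ : ∀ i, Function.Injective (φ i)) (i₀ : ι) [Nontrivial (X i₀)] :
    ∃ x : ∀ i, X i, (∀ i, φ i (x (e i)) = x i) ∧ x i₀ ≠ 0 := by
  let Φ : (∀ i, X i) →ₛₗ[frobenius k p] ∀ i, X i :=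
    { toFun x i := φ i (x (e i))
      map_add' x y := funext fun i => map_add (φ i) _ _
      map_smul' a x := funext fun i => map_smulₛₗ (φ i) a _ }
  have hΦ : Function.Injective Φ := fun x y hxy =>
    funext fun j => by
      obtain ⟨i, rfl⟩ := he j
      exact hφ i (congrFun hxy i)
  by_contra! hvanish
  have hker : (⊤ : Submodule k (∀ i, X i)) ≤ LinearMap.ker (LinearMap.proj i₀) :=
    span_fixed_eq_top hΦ ▸ Submodule.span_le.mpr fun x hx => hvanish x (congrFun hx)
  obtain ⟨y, hy⟩ := exists_ne (0 : X i₀)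
  obtain ⟨x, rfl⟩ := Function.surjective_eval i₀ y
  exact hy (hker trivial)

variable [PerfectRing k p] [IsAlgClosed k] {M : Type*} [AddCommGroup M] [Module k M]
  [FiniteDimensional k M] {F : M →ₛₗ[frobenius k p] M}
  {V : M →ₛₗ[((frobeniusEquiv k p).symm : k →+* k)] M} {r : ℕ} {c : Fin (r + 1) → Submodule k M}

theorem finrank_succ_of_maximal (hFV : LinearMap.ker F = LinearMap.range V)
    (hVF : LinearMap.ker V = LinearMap.range F) (hc : StrictMono c)
    (hmax : Maximal (IsBackwardStableChain (Submodule.map F) (Submodule.comap V)) (Set.range c))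
    (i : Fin r) : finrank k (c i.succ) = finrank k (c i.castSucc) + 1 := by
  have hlt (i : Fin r) : c i.castSucc < c i.succ := hc i.castSucc_lt_succ
  obtain ⟨e, he⟩ := (isCanonicalPair_map_comap hFV hVF).exists_perm_transition hc hmax
  choose φ hφ hline using fun i => exists_injective_of_isTransition hFV (hlt (e i)).le (he i)
  have : Nontrivial (Subquotient (c i.castSucc) (c i.succ)) :=
    Submodule.Quotient.nontrivial_iff.mpr (Submodule.submoduleOf_eq_top.not.mpr (hlt i).not_ge)
  obtain ⟨x, hfix, hxi⟩ := exists_fixed_family_apply_ne_zero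
    (X := fun i => Subquotient (c i.castSucc) (c i.succ)) e.surjective hφ i
  choose v hv using fun i => Submodule.Quotient.mk_surjective _ (x i)
  have hvi : (v i : M) ∉ c i.castSucc := fun h =>
    hxi (hv i ▸ subquotient_mk_eq_zero.mpr h)
  let N (i : Fin r) : Submodule k M := Submodule.span k {(v i : M)} ⊔ c i.castSucc
  have hNc (i : Fin r) : N i ≤ c i.succ :=
    sup_le ((Submodule.span_singleton_le_iff_mem _ _).mpr (v i).2) (hlt i).le
  have hNstep (i : Fin r) : (N (e i)).map F = N i ∨ (N (e i)).comap V = N i :=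
    hline i (v (e i)) (v i) (by rw [hv, hv, hfix])
  have hN : N i = c i.succ :=
    (eq_castSucc_or_eq_succ_of_maximal hc hmax (fun _ => le_sup_right) hNc
      (fun i => ⟨e i, hNstep i⟩) i).resolve_left fun h =>
        hvi (h ▸ Submodule.mem_sup_left (Submodule.mem_span_singleton_self _))
  rw [← hN, show N i = c i.castSucc ⊔ _ from sup_comm _ _,
    Submodule.finrank_sup_span_singleton hvi]

theorem finrank_eq_val_of_maximal (hFV : LinearMap.ker F = LinearMap.range V)
    (hVF : LinearMap.ker V = LinearMap.range F) (hc : StrictMono c)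
    (hmax : Maximal (IsBackwardStableChain (Submodule.map F) (Submodule.comap V)) (Set.range c))
    (j : Fin (r + 1)) : finrank k (c j) = j := by
  induction j using Fin.induction with
  | zero => rw [apply_zero_eq_bot hc.monotone hmax.prop.bot_mem, finrank_bot, Fin.val_zero]
  | succ i ih => rw [finrank_succ_of_maximal hFV hVF hc hmax, ih, Fin.val_succ, Fin.val_castSucc]

end Frobenius

/-- Let `(M, F, V)` be the Dieudonné space of a BT₁ group scheme over an algebraically closed
field `k` of characteristic `p`.  Then there exists a *final filtration* of `(M, F, V)`: a
complete flag `0 = M_0 ⊂ M_1 ⊂ ⋯ ⊂ M_n = M` of `k`-subspaces with `dim_k M_j = j`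
(where `n = dim_k M`) such that for every `j` there exist indices `j'` and `j''` with
`F(M_j) = M_{j'}` and `V⁻¹(M_j) = M_{j''}`. -/
theorem exists_final_filtration (p : ℕ) [Fact p.Prime] (k : Type*) [Field k] [CharP k p]
    [PerfectRing k p] [IsAlgClosed k] (M : Type*) [AddCommGroup M] [Module k M]
    [FiniteDimensional k M] (n : ℕ) (hn : finrank k M = n)
    (F : M →ₛₗ[frobenius k p] M)
    (V : M →ₛₗ[((frobeniusEquiv k p).symm : k →+* k)] M)
    (hFV : LinearMap.ker F = LinearMap.range V)
    (hVF : LinearMap.ker V = LinearMap.range F) :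
    ∃ Mfilt : Fin (n + 1) → Submodule k M,
      Mfilt 0 = ⊥ ∧ Mfilt (Fin.last n) = ⊤ ∧ StrictMono Mfilt ∧
      (∀ j : Fin (n + 1), finrank k (Mfilt j) = (j : ℕ)) ∧
      ∀ j : Fin (n + 1),
        (∃ j' : Fin (n + 1), (Mfilt j).map F = Mfilt j') ∧
        (∃ j'' : Fin (n + 1), (Mfilt j).comap V = Mfilt j'') := by
  have hpair := isCanonicalPair_map_comap hFV hVF
  obtain ⟨r, c, hc, hmax⟩ := hpair.exists_maximal_range
  have hbot : c 0 = ⊥ := apply_zero_eq_bot hc.monotone hmax.prop.bot_mem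
  have htop : c (Fin.last r) = ⊤ := apply_last_eq_top hc.monotone hmax.prop.top_mem
  have hfinrank := finrank_eq_val_of_maximal hFV hVF hc hmax
  obtain rfl : r = n := by rw [← hn, ← finrank_top, ← htop, hfinrank, Fin.val_last]
  exact ⟨c, hbot, htop, hc, hfinrank,
    fun j => ⟨hpair.exists_left_eq hmax j, hpair.exists_right_eq hmax j⟩⟩
end

section
/- Let k be algebraically closed. If M_• and M′_• are two final filtrations of (M, F, V) (complete flags with dim M_j = j such that every F(M_j) and every V^{−1}(M_j) is a member of the flag), then dim_k F(M_j) = dim_k F(M′_j) for every j. Moreover, in the principally quasi-polarized case with dim_k M = 2g, the function ψ(j) := dim_k F(M_j), 0 ≤ j ≤ 2g, is a final sequence: ψ(0) = 0, ψ(j) − ψ(j−1) ∈ {0,1} for all j, and ψ(2g − i) = ψ(i) + g − i for 0 ≤ i ≤ g. -/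
open Module

/-- A *final filtration* of `(M, F, V)`: a complete flag
`0 = M_0 ⊂ M_1 ⊂ ⋯ ⊂ M_n = M` with `dim_k M_j = j` (where `n = dim_k M`) such that every
`F(M_j)` and every `V⁻¹(M_j)` is again a member of the flag.
(Only the terms `Mf 0, …, Mf n` are relevant.) -/
def IsFinalFiltration (p : ℕ) [Fact p.Prime] {k : Type*} [Field k] [CharP k p]
    [PerfectRing k p] {M : Type*} [AddCommGroup M] [Module k M] (n : ℕ)
    (F : M →ₛₗ[frobenius k p] M)
    (V : M →ₛₗ[((frobeniusEquiv k p).symm : k →+* k)] M)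
    (Mf : ℕ → Submodule k M) : Prop :=
  Mf 0 = ⊥ ∧ Mf n = ⊤ ∧ (∀ j, j < n → Mf j < Mf (j + 1)) ∧
    (∀ j ≤ n, finrank k (Mf j) = j) ∧
    ∀ j ≤ n, (∃ j' ≤ n, (Mf j).map F = Mf j') ∧ (∃ j'' ≤ n, (Mf j).comap V = Mf j'')

/-!
The members common to two final filtrations form a set `S` of indices containing `0` and `n`. Since
`F` and `V⁻¹` send common members to common members, `S` is stable under `ψ j = dim F(M_j)` and
`φ j = dim V⁻¹(M_j)`. These functions are monotone, satisfy `ψ j + φ j = ψ n + j`, and take values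
below, respectively above, `ψ n`; hence `#ψ(S) + #φ(S) ≤ #S + 1`. On the other hand `(ψ, φ)` embeds
`S` as a chain in a product, and a nonempty chain `T` satisfies `#T + 1 ≤ #ψ(T) + #φ(T)`. If both
`ψ` and `φ` jumped from one element of `S` to the next, cutting `S` there would give two chains with
disjoint projections and `#S + 2 ≤ #ψ(S) + #φ(S)`. So one of them is constant on each gap of `S`,
and then `ψ` is determined there by its values on `S`, where the two filtrations agree.

For a polarization, the orthogonal complements of the members of a final filtration form a final
filtration again, and comparing it with the original one gives the functional equation of `ψ`.
-/

section Counting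

variable {ι α β : Type*} [LinearOrder ι]

theorem card_add_one_le_card_image_add_card_image [PartialOrder α] [PartialOrder β]
    [DecidableEq α] [DecidableEq β] {f : ι → α} {g : ι → β} {S : Finset ι} (hS : S.Nonempty)
    (hf : MonotoneOn f S) (hg : MonotoneOn g S) (hfg : Set.InjOn (fun i => (f i, g i)) S) :
    S.card + 1 ≤ (S.image f).card + (S.image g).card := by
  induction S using Finset.induction_on_max with
  | empty => simp at hS
  | insert x T hx ih =>
    rcases T.eq_empty_or_nonempty with rfl | hT
    · simp
    have hsub : (T : Set ι) ⊆ ↑(insert x T) := Finset.coe_subset.2 (Finset.subset_insert x T)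
    have hxmem : x ∈ (↑(insert x T) : Set ι) := Finset.mem_insert_self x T
    have card_T := ih hT (hf.mono hsub) (hg.mono hsub) (hfg.mono hsub)
    have new_value : f x ∉ T.image f ∨ g x ∉ T.image g := by
      by_contra! ⟨hfx, hgx⟩
      obtain ⟨s, hs, hsx⟩ := Finset.mem_image.1 hfx
      obtain ⟨t, ht, htx⟩ := Finset.mem_image.1 hgx
      have hu : max s t ∈ T := max_rec' (· ∈ T) hs ht
      have hux := hx _ hu
      refine hux.ne (hfg (hsub hu) hxmem (Prod.ext ?_ ?_))
      · exact (hf (hsub hu) hxmem hux.le).antisymm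
          (hsx.ge.trans (hf (hsub hs) (hsub hu) (le_max_left s t)))
      · exact (hg (hsub hu) hxmem hux.le).antisymm
          (htx.ge.trans (hg (hsub ht) (hsub hu) (le_max_right s t)))
    rw [Finset.card_insert_of_notMem fun h => (hx x h).false, Finset.image_insert,
      Finset.image_insert]
    have hf_le := Finset.card_le_card (Finset.subset_insert (f x) (T.image f))
    have hg_le := Finset.card_le_card (Finset.subset_insert (g x) (T.image g))
    rcases new_value with h | h <;> rw [Finset.card_insert_of_notMem h] at * <;> omega

theorem card_image_filter_le_add_card_image_filter_not_le [Preorder α] [DecidableEq α]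
    {f : ι → α} {S : Finset ι} (hf : MonotoneOn f S) {a b : ι} (ha : a ∈ S) (hb : b ∈ S)
    (hgap : ∀ c ∈ S, c ≤ a ∨ b ≤ c) (hab : f a < f b) :
    ((S.filter (· ≤ a)).image f).card + ((S.filter (¬ · ≤ a)).image f).card =
      (S.image f).card := by
  rw [← Finset.card_union_of_disjoint, ← Finset.image_union, Finset.filter_union_filter_not_eq]
  rw [Finset.disjoint_left]
  intro y hlow hhigh
  obtain ⟨c, hc, rfl⟩ := Finset.mem_image.1 hlow
  obtain ⟨e, he, hec⟩ := Finset.mem_image.1 hhigh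
  rw [Finset.mem_filter] at hc he
  have hbe : b ≤ e := (hgap e he.1).resolve_left he.2
  exact lt_irrefl _ <| calc
    f c ≤ f a := hf hc.1 ha hc.2
    _ < f b := hab
    _ ≤ f e := hf hb he.1 hbe
    _ = f c := hec

theorem card_add_two_le_card_image_add_card_image [PartialOrder α] [PartialOrder β]
    [DecidableEq α] [DecidableEq β] {f : ι → α} {g : ι → β} {S : Finset ι}
    (hf : MonotoneOn f S) (hg : MonotoneOn g S) (hfg : Set.InjOn (fun i => (f i, g i)) S)
    {a b : ι} (ha : a ∈ S) (hb : b ∈ S) (hgap : ∀ c ∈ S, c ≤ a ∨ b ≤ c)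
    (hfab : f a < f b) (hgab : g a < g b) :
    S.card + 2 ≤ (S.image f).card + (S.image g).card := by
  have hba : ¬ b ≤ a := fun h => (hf hb ha h).not_gt hfab
  have count : ∀ T ⊆ S, T.Nonempty → T.card + 1 ≤ (T.image f).card + (T.image g).card :=
    fun T hT hne => card_add_one_le_card_image_add_card_image hne
      (hf.mono (Finset.coe_subset.2 hT)) (hg.mono (Finset.coe_subset.2 hT))
      (hfg.mono (Finset.coe_subset.2 hT))
  have count_low := count (S.filter (· ≤ a)) (Finset.filter_subset _ S)
    ⟨a, Finset.mem_filter.2 ⟨ha, le_rfl⟩⟩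
  have count_high := count (S.filter (¬ · ≤ a)) (Finset.filter_subset _ S)
    ⟨b, Finset.mem_filter.2 ⟨hb, hba⟩⟩
  have split_S := S.card_filter_add_card_filter_not (· ≤ a)
  have split_f := card_image_filter_le_add_card_image_filter_not_le hf ha hb hgap hfab
  have split_g := card_image_filter_le_add_card_image_filter_not_le hg ha hb hgap hgab
  omega

theorem card_image_add_card_image_le_card_add_one [PartialOrder α] [DecidableEq α] {f g : α → α}
    {S : Finset α} (hfS : Set.MapsTo f S S) (hgS : Set.MapsTo g S S) {d : α}
    (hfd : ∀ i ∈ S, f i ≤ d) (hdg : ∀ i ∈ S, d ≤ g i) :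
    (S.image f).card + (S.image g).card ≤ S.card + 1 := by
  have hunion : S.image f ∪ S.image g ⊆ S :=
    Finset.union_subset (Finset.image_subset_iff.2 hfS) (Finset.image_subset_iff.2 hgS)
  have hinter : S.image f ∩ S.image g ⊆ {d} := by
    intro y hy
    obtain ⟨⟨i, hi, rfl⟩, j, hj, hji⟩ := by simpa only [Finset.mem_inter, Finset.mem_image] using hy
    exact Finset.mem_singleton.2 ((hfd i hi).antisymm (hji ▸ hdg j hj))
  rw [← Finset.card_union_add_card_inter]
  exact add_le_add (Finset.card_le_card hunion)
    ((Finset.card_le_card hinter).trans_eq (Finset.card_singleton d))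

end Counting

/-- The properties shared by `ψ j = dim F(M_j)` and `φ j = dim V⁻¹(M_j)` for a complete flag
`M_0 ⊂ ⋯ ⊂ M_n`: both are monotone on `{0, …, n}`, and `φ` is the shift `j ↦ ψ n + j` minus `ψ`.
The values at indices beyond `n` are irrelevant. -/
structure IsComplementaryPair (n : ℕ) (ψ φ : ℕ → ℕ) : Prop where
  map_zero : ψ 0 = 0
  monotoneOn_left : MonotoneOn ψ (Set.Iic n)
  monotoneOn_right : MonotoneOn φ (Set.Iic n)
  add_eq : ∀ j ≤ n, ψ j + φ j = ψ n + j

namespace IsComplementaryPair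

variable {n : ℕ} {ψ φ ψ' φ' : ℕ → ℕ}

theorem left_le (h : IsComplementaryPair n ψ φ) {j : ℕ} (hj : j ≤ n) : ψ j ≤ ψ n :=
  h.monotoneOn_left hj (Set.mem_Iic.2 le_rfl) hj

theorem le_right (h : IsComplementaryPair n ψ φ) {j : ℕ} (hj : j ≤ n) : ψ n ≤ φ j := by
  have hφ0 := h.add_eq 0 n.zero_le
  have hφj := h.monotoneOn_right (Set.mem_Iic.2 n.zero_le) hj j.zero_le
  have hψ0 := h.map_zero
  omega

theorem left_succ_le (h : IsComplementaryPair n ψ φ) {j : ℕ} (hj : j + 1 ≤ n) :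
    ψ (j + 1) ≤ ψ j + 1 := by
  have hφ := h.monotoneOn_right (Set.mem_Iic.2 (Nat.le_of_succ_le hj)) hj j.le_succ
  have sum_j := h.add_eq j (Nat.le_of_succ_le hj)
  have sum_succ := h.add_eq (j + 1) hj
  omega

theorem left_eq_or_right_eq_of_gap (h : IsComplementaryPair n ψ φ) {S : Finset ℕ}
    (hSn : ∀ j ∈ S, j ≤ n) (hψS : Set.MapsTo ψ S S) (hφS : Set.MapsTo φ S S) {a b : ℕ}
    (ha : a ∈ S) (hb : b ∈ S) (hab : a ≤ b) (hgap : ∀ c ∈ S, c ≤ a ∨ b ≤ c) :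
    ψ a = ψ b ∨ φ a = φ b := by
  have hψmono : MonotoneOn ψ S := h.monotoneOn_left.mono hSn
  have hφmono : MonotoneOn φ S := h.monotoneOn_right.mono hSn
  have hinj : Set.InjOn (fun i => (ψ i, φ i)) S := by
    intro i hi j hj hij
    have sum_i := h.add_eq i (hSn i hi)
    have sum_j := h.add_eq j (hSn j hj)
    simp only [Prod.mk.injEq] at hij
    omega
  have hcard := card_image_add_card_image_le_card_add_one hψS hφS
    (fun i hi => h.left_le (hSn i hi)) (fun i hi => h.le_right (hSn i hi))
  by_contra! ⟨hψ, hφ⟩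
  have := card_add_two_le_card_image_add_card_image hψmono hφmono hinj ha hb hgap
    ((hψmono ha hb hab).lt_of_ne hψ) ((hφmono ha hb hab).lt_of_ne hφ)
  omega

theorem left_eq_of_mem_Icc_of_const (h : IsComplementaryPair n ψ φ)
    (h' : IsComplementaryPair n ψ' φ') (hlast : ψ n = ψ' n) {a b j : ℕ} (ha : ψ a = ψ' a)
    (hb : ψ b = ψ' b) (hbn : b ≤ n) (hj : j ∈ Set.Icc a b) (hconst : ψ a = ψ b ∨ φ a = φ b) :
    ψ j = ψ' j := by
  obtain ⟨haj, hjb⟩ := hj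
  have hjn : j ≤ n := hjb.trans hbn
  have han : a ≤ n := haj.trans hjn
  have hψa := h.monotoneOn_left han hjn haj
  have hψb := h.monotoneOn_left hjn hbn hjb
  have hφa := h.monotoneOn_right han hjn haj
  have hφb := h.monotoneOn_right hjn hbn hjb
  have hψa' := h'.monotoneOn_left han hjn haj
  have hψb' := h'.monotoneOn_left hjn hbn hjb
  have hφa' := h'.monotoneOn_right han hjn haj
  have hφb' := h'.monotoneOn_right hjn hbn hjb
  have sum := fun i hi => And.intro (h.add_eq i hi) (h'.add_eq i hi)
  have sum_a := sum a han
  have sum_b := sum b hbn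
  have sum_j := sum j hjn
  omega

theorem eqOn_of_eqOn_stable (h : IsComplementaryPair n ψ φ) (h' : IsComplementaryPair n ψ' φ')
    {S : Finset ℕ} (hSn : ∀ j ∈ S, j ≤ n) (h0 : 0 ∈ S) (hn : n ∈ S) (hψS : Set.MapsTo ψ S S)
    (hφS : Set.MapsTo φ S S) (heq : Set.EqOn ψ ψ' S) : Set.EqOn ψ ψ' (Set.Iic n) := by
  intro j hj
  have hbelow : (S.filter (· ≤ j)).Nonempty := ⟨0, Finset.mem_filter.2 ⟨h0, j.zero_le⟩⟩
  have habove : (S.filter (j ≤ ·)).Nonempty := ⟨n, Finset.mem_filter.2 ⟨hn, hj⟩⟩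
  obtain ⟨a, ha, ha_max⟩ := (S.filter (· ≤ j)).exists_max_image id hbelow
  obtain ⟨b, hb, hb_min⟩ := (S.filter (j ≤ ·)).exists_min_image id habove
  simp only [Finset.mem_filter, id_eq, and_imp] at ha ha_max hb hb_min
  have hgap : ∀ c ∈ S, c ≤ a ∨ b ≤ c := fun c hc =>
    (le_total c j).imp (ha_max c hc) (hb_min c hc)
  exact h.left_eq_of_mem_Icc_of_const h' (heq hn) (heq ha.1) (heq hb.1) (hSn b hb.1) ⟨ha.2, hb.2⟩
    (h.left_eq_or_right_eq_of_gap hSn hψS hφS ha.1 hb.1 (ha.2.trans hb.2) hgap)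

end IsComplementaryPair

section SemilinearRank

variable {k k' : Type*} [DivisionRing k] [DivisionRing k'] {σ : k →+* k'} [RingHomSurjective σ]
  {M M' : Type*} [AddCommGroup M] [Module k M] [AddCommGroup M'] [Module k' M']

theorem finrank_eq_of_bijective_semilinear {f : M →ₛₗ[σ] M'} (hf : Function.Bijective f) :
    finrank k M = finrank k' M' := by
  have hrank := lift_rank_eq_of_equiv_equiv σ (AddEquiv.ofBijective f.toAddMonoidHom hf)
    ⟨σ.injective, RingHomSurjective.is_surjective⟩ f.map_smulₛₗ
  simpa only [finrank, Cardinal.toNat_lift] using congrArg Cardinal.toNat hrank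

theorem finrank_add_finrank_ker_of_surjective_semilinear [FiniteDimensional k M]
    {f : M →ₛₗ[σ] M'} (hf : Function.Surjective f) :
    finrank k' M' + finrank k (LinearMap.ker f) = finrank k M := by
  let fbar := (LinearMap.ker f).liftQ f le_rfl
  have hinj : Function.Injective fbar :=
    LinearMap.ker_eq_bot.1 (Submodule.ker_liftQ_eq_bot _ _ _ le_rfl)
  have hsurj : Function.Surjective fbar := fun y =>
    (hf y).imp' (Submodule.Quotient.mk (p := LinearMap.ker f)) fun _ hx => hx
  rw [← finrank_eq_of_bijective_semilinear ⟨hinj, hsurj⟩, Submodule.finrank_quotient_add_finrank]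

theorem finrank_map_add_finrank_inf_ker [FiniteDimensional k M] (f : M →ₛₗ[σ] M')
    (N : Submodule k M) :
    finrank k' (N.map f) + finrank k (N ⊓ LinearMap.ker f : Submodule k M) = finrank k N := by
  have hker : LinearMap.ker (f.submoduleMap N) = (LinearMap.ker f).comap N.subtype := by
    ext x
    simp [← Subtype.coe_inj]
  rw [← Submodule.map_comap_subtype, Submodule.finrank_map_subtype_eq, ← hker]
  exact finrank_add_finrank_ker_of_surjective_semilinear (f.submoduleMap_surjective N)

end SemilinearRank

/-- The notion of a final filtration for maps `F` and `V` that are semilinear over arbitrary ring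
endomorphisms: a complete flag `M_0 ≤ ⋯ ≤ M_n = M` with `dim M_j = j` whose set of members is stable
under `F` and under `V⁻¹`. The terms beyond `M_n` are irrelevant. -/
structure IsStableFlag {k : Type*} [DivisionRing k] {σ τ : k →+* k} [RingHomSurjective σ]
    {M : Type*} [AddCommGroup M] [Module k M] (F : M →ₛₗ[σ] M) (V : M →ₛₗ[τ] M) (n : ℕ)
    (Mf : ℕ → Submodule k M) : Prop where
  top_eq : Mf n = ⊤
  monotoneOn : MonotoneOn Mf (Set.Iic n)
  finrank_eq : ∀ j ≤ n, finrank k (Mf j) = j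
  exists_map_eq : ∀ j ≤ n, ∃ i ≤ n, (Mf j).map F = Mf i
  exists_comap_eq : ∀ j ≤ n, ∃ i ≤ n, (Mf j).comap V = Mf i

section Uniqueness

variable {k : Type*} [DivisionRing k] {σ τ : k →+* k} [RingHomSurjective σ] {M : Type*}
  [AddCommGroup M] [Module k M] {F : M →ₛₗ[σ] M} {V : M →ₛₗ[τ] M} {n : ℕ}
  {Mf Mf' : ℕ → Submodule k M}

theorem finrank_map_add_finrank_comap [RingHomSurjective τ] [FiniteDimensional k M]
    (hFV : LinearMap.ker F = LinearMap.range V) (hVF : LinearMap.ker V = LinearMap.range F)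
    (N : Submodule k M) :
    finrank k (N.map F) + finrank k (N.comap V) = finrank k (LinearMap.range F) + finrank k N := by
  have rank_F := finrank_map_add_finrank_inf_ker F N
  have rank_V := finrank_map_add_finrank_inf_ker V (N.comap V)
  have hker : LinearMap.ker V ≤ N.comap V := Submodule.comap_mono bot_le
  rw [Submodule.map_comap_eq, ← hFV, inf_comm, inf_eq_right.2 hker, hVF] at rank_V
  omega

namespace IsStableFlag

theorem finrank_eq_length (h : IsStableFlag F V n Mf) : finrank k M = n := by
  rw [← finrank_top, ← h.top_eq, h.finrank_eq n le_rfl]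

theorem finrank_map_le (h : IsStableFlag F V n Mf) {j : ℕ} (hj : j ≤ n) :
    finrank k ((Mf j).map F) ≤ n := by
  obtain ⟨i, hi, hmap⟩ := h.exists_map_eq j hj
  rwa [hmap, h.finrank_eq i hi]

theorem finrank_comap_le (h : IsStableFlag F V n Mf) {j : ℕ} (hj : j ≤ n) :
    finrank k ((Mf j).comap V) ≤ n := by
  obtain ⟨i, hi, hcomap⟩ := h.exists_comap_eq j hj
  rwa [hcomap, h.finrank_eq i hi]

theorem apply_finrank_map (h : IsStableFlag F V n Mf) {j : ℕ} (hj : j ≤ n) :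
    Mf (finrank k ((Mf j).map F)) = (Mf j).map F := by
  obtain ⟨i, hi, hmap⟩ := h.exists_map_eq j hj
  rw [hmap, h.finrank_eq i hi]

theorem apply_finrank_comap (h : IsStableFlag F V n Mf) {j : ℕ} (hj : j ≤ n) :
    Mf (finrank k ((Mf j).comap V)) = (Mf j).comap V := by
  obtain ⟨i, hi, hcomap⟩ := h.exists_comap_eq j hj
  rw [hcomap, h.finrank_eq i hi]

variable [FiniteDimensional k M]

theorem zero_eq_bot (h : IsStableFlag F V n Mf) : Mf 0 = ⊥ :=
  Submodule.finrank_eq_zero.1 (h.finrank_eq 0 n.zero_le)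

theorem isComplementaryPair [RingHomSurjective τ] (h : IsStableFlag F V n Mf)
    (hFV : LinearMap.ker F = LinearMap.range V) (hVF : LinearMap.ker V = LinearMap.range F) :
    IsComplementaryPair n (fun j => finrank k ((Mf j).map F))
      (fun j => finrank k ((Mf j).comap V)) where
  map_zero := by rw [h.zero_eq_bot, Submodule.map_bot, finrank_bot]
  monotoneOn_left _ hi _ hj hij :=
    Submodule.finrank_mono (Submodule.map_mono (h.monotoneOn hi hj hij))
  monotoneOn_right _ hi _ hj hij :=
    Submodule.finrank_mono (Submodule.comap_mono (h.monotoneOn hi hj hij))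
  add_eq j hj := by
    rw [finrank_map_add_finrank_comap hFV hVF, h.top_eq, LinearMap.range_eq_map, h.finrank_eq j hj]

theorem finrank_map_eq [RingHomSurjective τ] (h : IsStableFlag F V n Mf)
    (h' : IsStableFlag F V n Mf')
    (hFV : LinearMap.ker F = LinearMap.range V) (hVF : LinearMap.ker V = LinearMap.range F)
    {j : ℕ} (hj : j ≤ n) : finrank k ((Mf j).map F) = finrank k ((Mf' j).map F) := by
  classical
  let common : Finset ℕ := (Finset.range (n + 1)).filter fun j => Mf j = Mf' j
  have mem_common : ∀ {j}, j ∈ common ↔ j ≤ n ∧ Mf j = Mf' j := by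
    simp [common]
  refine (h.isComplementaryPair hFV hVF).eqOn_of_eqOn_stable (h'.isComplementaryPair hFV hVF)
    (S := common) (fun i hi => (mem_common.1 hi).1)
    (mem_common.2 ⟨n.zero_le, h.zero_eq_bot.trans h'.zero_eq_bot.symm⟩)
    (mem_common.2 ⟨le_rfl, h.top_eq.trans h'.top_eq.symm⟩) ?_ ?_ ?_ hj
  all_goals
    intro i hi
    obtain ⟨hin, heq⟩ := mem_common.1 hi
  · have hmap : Mf' (finrank k ((Mf i).map F)) = (Mf i).map F := heq ▸ h'.apply_finrank_map hin
    exact mem_common.2 ⟨h.finrank_map_le hin, (h.apply_finrank_map hin).trans hmap.symm⟩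
  · have hcomap : Mf' (finrank k ((Mf i).comap V)) = (Mf i).comap V :=
      heq ▸ h'.apply_finrank_comap hin
    exact mem_common.2 ⟨h.finrank_comap_le hin, (h.apply_finrank_comap hin).trans hcomap.symm⟩
  · exact congrArg (fun N : Submodule k M => finrank k (N.map F)) heq

end IsStableFlag

end Uniqueness

section Duality

variable {k : Type*} [Field k] {σ τ : k →+* k} [RingHomSurjective σ] {M : Type*}
  [AddCommGroup M] [Module k M] {F : M →ₛₗ[σ] M} {V : M →ₛₗ[τ] M} {B : LinearMap.BilinForm k M}

theorem comap_orthogonal_eq_orthogonal_map (hB : ∀ x y, B (F x) y = σ (B x (V y)))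
    (N : Submodule k M) : (B.orthogonal N).comap V = B.orthogonal (N.map F) := by
  ext y
  simp [LinearMap.BilinForm.mem_orthogonal_iff, hB]

variable [FiniteDimensional k M]

theorem map_orthogonal_eq_orthogonal_comap (hB : ∀ x y, B (F x) y = σ (B x (V y)))
    (hrefl : B.IsRefl) (hnd : B.Nondegenerate) (N : Submodule k M) :
    (B.orthogonal N).map F = B.orthogonal (N.comap V) := by
  have hcomap := comap_orthogonal_eq_orthogonal_map hB (B.orthogonal N)
  rw [LinearMap.BilinForm.orthogonal_orthogonal hnd hrefl] at hcomap
  rw [hcomap, LinearMap.BilinForm.orthogonal_orthogonal hnd hrefl]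

theorem two_mul_finrank_range (hB : ∀ x y, B (F x) y = σ (B x (V y))) (hnd : B.Nondegenerate)
    (hVF : LinearMap.ker V = LinearMap.range F) :
    2 * finrank k (LinearMap.range F) = finrank k M := by
  have hself : LinearMap.range F = B.orthogonal (LinearMap.range F) := calc
    LinearMap.range F = (⊥ : Submodule k M).comap V := hVF.symm
    _ = (B.orthogonal ⊤).comap V := by rw [LinearMap.BilinForm.orthogonal_top_eq_bot hnd]
    _ = B.orthogonal (LinearMap.range F) := by
      rw [comap_orthogonal_eq_orthogonal_map hB, ← LinearMap.range_eq_map]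
  have hfinrank := LinearMap.BilinForm.finrank_orthogonal hnd (LinearMap.range F)
  have hle := Submodule.finrank_le (LinearMap.range F)
  rw [← hself] at hfinrank
  omega

namespace IsStableFlag

variable {n : ℕ} {Mf : ℕ → Submodule k M}

theorem orthogonal (h : IsStableFlag F V n Mf) (hB : ∀ x y, B (F x) y = σ (B x (V y)))
    (hrefl : B.IsRefl) (hnd : B.Nondegenerate) :
    IsStableFlag F V n (fun j => B.orthogonal (Mf (n - j))) where
  top_eq := by
    rw [Nat.sub_self, h.zero_eq_bot, LinearMap.BilinForm.orthogonal_bot]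
  monotoneOn i _ j _ hij := LinearMap.BilinForm.orthogonal_le <|
    h.monotoneOn (n.sub_le j) (n.sub_le i) (Nat.sub_le_sub_left hij n)
  finrank_eq j hj := by
    rw [LinearMap.BilinForm.finrank_orthogonal hnd, h.finrank_eq_length,
      h.finrank_eq _ (n.sub_le j), Nat.sub_sub_self hj]
  exists_map_eq j _ := by
    obtain ⟨i, hi, hcomap⟩ := h.exists_comap_eq (n - j) (n.sub_le j)
    refine ⟨n - i, n.sub_le i, ?_⟩
    rw [map_orthogonal_eq_orthogonal_comap hB hrefl hnd, hcomap, Nat.sub_sub_self hi]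
  exists_comap_eq j _ := by
    obtain ⟨i, hi, hmap⟩ := h.exists_map_eq (n - j) (n.sub_le j)
    refine ⟨n - i, n.sub_le i, ?_⟩
    rw [comap_orthogonal_eq_orthogonal_map hB, hmap, Nat.sub_sub_self hi]

theorem finrank_map_sub_add [RingHomSurjective τ] (h : IsStableFlag F V n Mf)
    (hFV : LinearMap.ker F = LinearMap.range V) (hVF : LinearMap.ker V = LinearMap.range F)
    (hB : ∀ x y, B (F x) y = σ (B x (V y))) (hrefl : B.IsRefl) (hnd : B.Nondegenerate)
    {i : ℕ} (hi : i ≤ n) :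
    finrank k ((Mf (n - i)).map F) + i =
      finrank k ((Mf i).map F) + finrank k (LinearMap.range F) := by
  have hdual : finrank k ((Mf i).map F) = n - finrank k ((Mf (n - i)).comap V) := by
    rw [h.finrank_map_eq (h.orthogonal hB hrefl hnd) hFV hVF hi,
      map_orthogonal_eq_orthogonal_comap hB hrefl hnd,
      LinearMap.BilinForm.finrank_orthogonal hnd, h.finrank_eq_length]
  have hsum := finrank_map_add_finrank_comap hFV hVF (Mf (n - i))
  have hle := h.finrank_comap_le (n.sub_le i)
  rw [h.finrank_eq _ (n.sub_le i)] at hsum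
  omega

end IsStableFlag

end Duality

theorem IsFinalFiltration.isStableFlag {p : ℕ} [Fact p.Prime] {k : Type*} [Field k] [CharP k p]
    [PerfectRing k p] {M : Type*} [AddCommGroup M] [Module k M] {n : ℕ}
    {F : M →ₛₗ[frobenius k p] M} {V : M →ₛₗ[((frobeniusEquiv k p).symm : k →+* k)] M}
    {Mf : ℕ → Submodule k M} (h : IsFinalFiltration p n F V Mf) : IsStableFlag F V n Mf := by
  obtain ⟨-, htop, hlt, hfinrank, hstable⟩ := h
  exact
    { top_eq := htop
      monotoneOn := monotoneOn_of_le_succ Set.ordConnected_Iic fun j _ _ hj => (hlt j hj).le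
      finrank_eq := hfinrank
      exists_map_eq := fun j hj => (hstable j hj).1
      exists_comap_eq := fun j hj => (hstable j hj).2 }

theorem final_filtration_dim_welldefined_general {k : Type*} [Field k] {σ τ : k →+* k}
    [RingHomSurjective σ] [RingHomSurjective τ] {M : Type*} [AddCommGroup M] [Module k M]
    [FiniteDimensional k M] {n : ℕ} {F : M →ₛₗ[σ] M} {V : M →ₛₗ[τ] M}
    (hFV : LinearMap.ker F = LinearMap.range V) (hVF : LinearMap.ker V = LinearMap.range F)
    {Mf Mf' : ℕ → Submodule k M} (hMf : IsStableFlag F V n Mf) (hMf' : IsStableFlag F V n Mf') :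
    (∀ j ≤ n, finrank k ((Mf j).map F) = finrank k ((Mf' j).map F)) ∧
    ∀ g : ℕ, n = 2 * g →
      ∀ B : LinearMap.BilinForm k M, B.IsRefl → B.Nondegenerate →
        (∀ x y, B (F x) y = σ (B x (V y))) →
        letI ψ : ℕ → ℕ := fun j => finrank k ((Mf j).map F)
        ψ 0 = 0 ∧
        (∀ j, 1 ≤ j → j ≤ 2 * g → ψ (j - 1) ≤ ψ j ∧ ψ j ≤ ψ (j - 1) + 1) ∧
        ∀ i ≤ g, ψ (2 * g - i) = ψ i + (g - i) := by
  refine ⟨fun j hj => hMf.finrank_map_eq hMf' hFV hVF hj, ?_⟩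
  rintro g rfl B hrefl hnd hB
  have hpair := hMf.isComplementaryPair hFV hVF
  refine ⟨hpair.map_zero, ?_, fun i hi => ?_⟩
  · rintro (_ | j) hj0 hj
    · omega
    · exact ⟨hpair.monotoneOn_left (Nat.le_of_succ_le hj) hj j.le_succ, hpair.left_succ_le hj⟩
  · have hrange := two_mul_finrank_range hB hnd hVF
    have hsymm := hMf.finrank_map_sub_add hFV hVF hB hrefl hnd (i := i) (by omega)
    rw [hMf.finrank_eq_length] at hrange
    change finrank k ((Mf (2 * g - i)).map F) = finrank k ((Mf i).map F) + (g - i)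
    omega

/-- Let `k` be algebraically closed.  If `M_•` and `M'_•` are two final filtrations of
`(M, F, V)`, then `dim_k F(M_j) = dim_k F(M'_j)` for every `j`.  Moreover, in the
principally quasi-polarized case with `dim_k M = 2g`, the function
`ψ(j) := dim_k F(M_j)`, `0 ≤ j ≤ 2g`, is a final sequence: `ψ 0 = 0`,
`ψ j - ψ (j-1) ∈ {0, 1}` for all `j`, and `ψ (2g - i) = ψ i + (g - i)` for `0 ≤ i ≤ g`. -/
theorem final_filtration_dim_welldefined (p : ℕ) [Fact p.Prime] (k : Type*) [Field k]
    [CharP k p] [PerfectRing k p] [IsAlgClosed k] (M : Type*) [AddCommGroup M] [Module k M]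
    [FiniteDimensional k M] (n : ℕ) (hn : finrank k M = n)
    (F : M →ₛₗ[frobenius k p] M)
    (V : M →ₛₗ[((frobeniusEquiv k p).symm : k →+* k)] M)
    (hFV : LinearMap.ker F = LinearMap.range V)
    (hVF : LinearMap.ker V = LinearMap.range F)
    (Mf Mf' : ℕ → Submodule k M)
    (hMf : IsFinalFiltration p n F V Mf) (hMf' : IsFinalFiltration p n F V Mf') :
    (∀ j ≤ n, finrank k ((Mf j).map F) = finrank k ((Mf' j).map F)) ∧
    ∀ g : ℕ, n = 2 * g →
      ∀ B : M →ₗ[k] M →ₗ[k] k, (∀ x, B x x = 0) → (∀ x, (∀ y, B x y = 0) → x = 0) →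
        (∀ x y, B (F x) y = (B x (V y)) ^ p) →
        letI ψ : ℕ → ℕ := fun j => finrank k ((Mf j).map F)
        ψ 0 = 0 ∧
        (∀ j, 1 ≤ j → j ≤ 2 * g → ψ (j - 1) ≤ ψ j ∧ ψ j ≤ ψ (j - 1) + 1) ∧
        ∀ i ≤ g, ψ (2 * g - i) = ψ i + (g - i) := by
  obtain ⟨heq, hpol⟩ := final_filtration_dim_welldefined_general hFV hVF hMf.isStableFlag
    hMf'.isStableFlag
  refine ⟨heq, fun g hg B halt hsep => ?_⟩
  have hrefl : B.IsRefl := LinearMap.IsAlt.isRefl halt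
  exact hpol g hg B hrefl (hrefl.nondegenerate_iff_separatingLeft.2 hsep)
end

section
/- Let k be an algebraically closed field of characteristic p, and let (M, F, V) and (M′, F′, V′) be two such triples. They are isomorphic — i.e., there is a k-linear bijection α : M → M′ with α∘F = F′∘α and α∘V = V′∘α — if and only if for every finite word w in the two subspace operations N ↦ F(N) and N ↦ V^{−1}(N), the subspaces obtained by applying w to M and to M′ (using F, V and F′, V′ respectively) have the same dimension. -/
open Module

/-!
The subspaces named by words, together with `0`, form a finite flag, the canonical flag; let
`G₀ < ⋯ < G_r` be its members. Both `F` and `V⁻¹` act on it, `F` landing below and `V⁻¹` above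
`F(M) = ker V`. Since every member of the flag is an `F(G_j)` or a `V⁻¹(G_j)`, and since `F` and
`V⁻¹` together detect every strict inclusion, each block `G_{i+1}/G_i` is identified with exactly
one block `G_{ρ(i)+1}/G_{ρ(i)}`: by a section of `F` if it lies below `F(M)`, and by `V` otherwise.
The permutation `ρ` depends only on the dimensions of the word subspaces.

Choosing these sections semilinear over `τ = σ⁻¹` and compatible with the flag, one gets on the
product of the `G_{i+1}` a `τ`-semilinear endomorphism that is injective modulo the product of the
`G_i`. A theorem of Lang type (solve `x = W x` on the span of the iterates of one vector; this
reduces to an additive polynomial, which has roots in `k`) provides enough fixed points to span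
every block. As fixed points they satisfy the relations exactly in `M` and not only in the blocks,
so they form a basis permuted by `F` and `V` according to `ρ` and the block dimensions alone.
-/

namespace Kraft

/-! ### Fixed vectors of semilinear maps -/

section Lang

section Polynomial

open Polynomial

variable {k : Type*} [Field k]

lemma exists_isRoot_ne_zero_of_coeff_ne_zero [IsAlgClosed k] {P : k[X]} {a b : ℕ} (hab : a ≠ b)
    (ha : P.coeff a ≠ 0) (hb : P.coeff b ≠ 0) : ∃ t, t ≠ 0 ∧ P.IsRoot t := by
  by_contra! hroots
  have hroots_zero : P.roots = Multiset.replicate P.roots.card 0 :=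
    Multiset.eq_replicate_of_mem fun t ht ↦ by_contra fun ht0 ↦
      hroots t ht0 (isRoot_of_mem_roots ht)
  have hmonomial : P = C P.leadingCoeff * X ^ P.roots.card := by
    have h := (IsAlgClosed.splits P).eq_prod_roots
    rwa [hroots_zero, Multiset.map_replicate, C_0, sub_zero, Multiset.prod_replicate] at h
  rw [hmonomial, coeff_C_mul_X_pow] at ha hb
  exact hab ((ite_ne_right_iff.1 ha).1.trans (ite_ne_right_iff.1 hb).1.symm)

/-- The polynomial `X ^ q ^ m - (∑ l < m, e l * X ^ q ^ l + ε)`. When `q` is a power of the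
characteristic it is additive up to the constant `ε`. -/
noncomputable def additivePolynomial (q m : ℕ) (e : ℕ → k) (ε : k) : k[X] :=
  X ^ q ^ m - (∑ l ∈ Finset.range m, C (e l) * X ^ q ^ l + C ε)

variable {q m : ℕ} {e : ℕ → k} {ε : k}

lemma isRoot_additivePolynomial {t : k} : (additivePolynomial q m e ε).IsRoot t ↔
    t ^ q ^ m = ∑ l ∈ Finset.range m, e l * t ^ q ^ l + ε := by
  simp [additivePolynomial, eval_finsetSum, sub_eq_zero]

lemma coeff_additivePolynomial_self (hq : 1 < q) :
    (additivePolynomial q m e ε).coeff (q ^ m) = 1 := by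
  have hne : ∀ l ∈ Finset.range m, q ^ m ≠ q ^ l := fun l hl ↦
    (Nat.pow_lt_pow_right hq (Finset.mem_range.1 hl)).ne'
  simp +contextual [additivePolynomial, coeff_X_pow, coeff_C, hne, show q ≠ 0 by lia]

lemma coeff_additivePolynomial_of_lt (hq : 1 < q) {l : ℕ} (hl : l < m) :
    (additivePolynomial q m e ε).coeff (q ^ l) = -e l := by
  have hne : q ^ l ≠ q ^ m := (Nat.pow_lt_pow_right hq hl).ne
  simp [additivePolynomial, coeff_X_pow, coeff_C, hne, show q ≠ 0 by lia, hl,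
    Nat.pow_right_inj hq]

variable [IsAlgClosed k]

lemma exists_pow_eq_sum_add (hq : 1 < q) (m : ℕ) (e : ℕ → k) (ε : k) :
    ∃ t, t ^ q ^ m = ∑ l ∈ Finset.range m, e l * t ^ q ^ l + ε := by
  obtain ⟨t, ht⟩ := IsAlgClosed.exists_root (additivePolynomial q m e ε) fun hdegree ↦ by
    have hcoeff := coeff_additivePolynomial_self (m := m) (e := e) (ε := ε) hq
    rw [eq_C_of_degree_eq_zero hdegree, coeff_C_of_ne_zero (by positivity)] at hcoeff
    exact zero_ne_one hcoeff
  exact ⟨t, isRoot_additivePolynomial.1 ht⟩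

lemma exists_ne_zero_pow_eq_sum (hq : 1 < q) {l : ℕ} (hl : l < m) (he : e l ≠ 0) :
    ∃ t, t ≠ 0 ∧ t ^ q ^ m = ∑ l ∈ Finset.range m, e l * t ^ q ^ l := by
  obtain ⟨t, ht0, ht⟩ := exists_isRoot_ne_zero_of_coeff_ne_zero
    (P := additivePolynomial q m e 0) (Nat.pow_lt_pow_right hq hl).ne
    (by rwa [coeff_additivePolynomial_of_lt hq hl, neg_ne_zero])
    (by rw [coeff_additivePolynomial_self hq]; exact one_ne_zero)
  exact ⟨t, ht0, by simpa only [add_zero] using isRoot_additivePolynomial.1 ht⟩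

end Polynomial

section FixedVectors

variable {k : Type*} [Field k] {M : Type*} [AddCommGroup M] [Module k M]

lemma exists_linearIndependent_and_eq_sum [FiniteDimensional k M] (u : ℕ → M) :
    ∃ m, LinearIndependent k (fun j : Fin m ↦ u j) ∧
      ∃ c : ℕ → k, u m = ∑ j ∈ Finset.range m, c j • u j := by
  classical
  have hdep : ∃ m, ¬ LinearIndependent k (fun j : Fin (m + 1) ↦ u j) :=
    ⟨finrank k M, fun h ↦ by simpa using h.fintype_card_le_finrank⟩
  let m := Nat.find hdep
  have hindep : LinearIndependent k (fun j : Fin m ↦ u j) := by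
    rcases hm : m with _ | n
    · exact linearIndependent_empty_type
    · exact not_not.1 (Nat.find_min hdep (m := n) (by lia))
  have hmem : u m ∈ Submodule.span k (Set.range fun j : Fin m ↦ u j) := by
    by_contra hmem
    exact Nat.find_spec hdep (linearIndependent_finSucc'.2 ⟨hindep, hmem⟩)
  obtain ⟨c, hc⟩ := (Submodule.mem_span_range_iff_exists_fun k).1 hmem
  refine ⟨m, hindep, fun j ↦ if h : j < m then c ⟨j, h⟩ else 0, ?_⟩
  simp [Finset.sum_range, hc]

variable {q : ℕ} {τ : k →+* k}

lemma pow_apply_pow_pow (hτ : ∀ a, τ a ^ q = a) (j : ℕ) (a : k) : (τ ^ j) (a ^ q ^ j) = a := by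
  induction j with
  | zero => simp
  | succ j ih =>
    rw [pow_succ' τ, RingHom.mul_def, RingHom.comp_apply, pow_succ, pow_mul, map_pow, ih, map_pow,
      hτ]

/-- Coefficients `b` for which `∑ j < m, b (j + 1) • W^[j] z` solves `x = τ ε • z + W x` as soon as
`b m = t`, where `W^[m] z = ∑ j < m, c j • W^[j] z`. Comparing coefficients gives the recursion
`b (j + 1) = τ (b j) + c j * τ t`, which this formula solves. -/
def krylovCoeff (q : ℕ) (τ : k →+* k) (c : ℕ → k) (ε t : k) (j : ℕ) : k :=
  (τ ^ j) (∑ l ∈ Finset.range j, c l ^ q ^ (l + 1) * t ^ q ^ l + ε)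

lemma krylovCoeff_succ (hτ : ∀ a, τ a ^ q = a) (c : ℕ → k) (ε t : k) (j : ℕ) :
    krylovCoeff q τ c ε t (j + 1) = τ (krylovCoeff q τ c ε t j) + c j * τ t := by
  have ht : (τ ^ (j + 1)) (t ^ q ^ j) = τ t := by
    rw [pow_succ', RingHom.mul_def, RingHom.comp_apply, pow_apply_pow_pow hτ]
  have hτ_succ (a : k) : (τ ^ (j + 1)) a = τ ((τ ^ j) a) := by rw [pow_succ']; rfl
  rw [krylovCoeff, Finset.sum_range_succ, add_right_comm, map_add, map_mul,
    pow_apply_pow_pow hτ, ht, hτ_succ, krylovCoeff]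

lemma krylovCoeff_self (hτ : ∀ a, τ a ^ q = a) {c : ℕ → k} {ε t : k} {m : ℕ}
    (ht : t ^ q ^ m = ∑ l ∈ Finset.range m, c l ^ q ^ (l + 1) * t ^ q ^ l + ε) :
    krylovCoeff q τ c ε t m = t := by
  rw [krylovCoeff, ← ht, pow_apply_pow_pow hτ]

lemma sum_krylovCoeff_smul_iterate (hτ : ∀ a, τ a ^ q = a) (W : M →ₛₗ[τ] M) {z : M} {c : ℕ → k}
    {ε t : k} {m : ℕ} (hz : W^[m] z = ∑ j ∈ Finset.range m, c j • W^[j] z)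
    (ht : t ^ q ^ m = ∑ l ∈ Finset.range m, c l ^ q ^ (l + 1) * t ^ q ^ l + ε) :
    ∑ j ∈ Finset.range m, krylovCoeff q τ c ε t (j + 1) • W^[j] z =
      τ ε • z + W (∑ j ∈ Finset.range m, krylovCoeff q τ c ε t (j + 1) • W^[j] z) := by
  set b := krylovCoeff q τ c ε t
  have hb_zero : b 0 = ε := by simp [b, krylovCoeff]
  have hb_succ : ∀ j, b (j + 1) = τ (b j) + c j * τ t := krylovCoeff_succ hτ c ε t
  have hb_self : b m = t := krylovCoeff_self hτ ht
  calc ∑ j ∈ Finset.range m, b (j + 1) • W^[j] z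
      = ∑ j ∈ Finset.range m, τ (b j) • W^[j] z + τ t • W^[m] z := by
        rw [hz, Finset.smul_sum, ← Finset.sum_add_distrib]
        exact Finset.sum_congr rfl fun j _ ↦ by
          rw [hb_succ, add_smul, smul_smul, mul_comm]
    _ = ∑ j ∈ Finset.range (m + 1), τ (b j) • W^[j] z := by
        rw [Finset.sum_range_succ, hb_self]
    _ = τ ε • z + W (∑ j ∈ Finset.range m, b (j + 1) • W^[j] z) := by
        simp_rw [Finset.sum_range_succ', map_sum, map_smulₛₗ, Function.iterate_succ_apply', hb_zero]
        exact add_comm _ _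

lemma comap_sup_map [RingHomSurjective τ] {N : Type*} [AddCommGroup N] [Module k N]
    (W : M →ₛₗ[τ] N) (A : Submodule k N) (B : Submodule k M) :
    (A ⊔ B.map W).comap W = A.comap W ⊔ B := by
  refine le_antisymm (fun x hx ↦ ?_) (sup_le (Submodule.comap_mono le_sup_left)
    (Submodule.map_le_iff_le_comap.1 le_sup_right))
  obtain ⟨a, ha, _, ⟨b, hb, rfl⟩, hab⟩ := Submodule.mem_sup.1 hx
  have hxb : x - b ∈ A.comap W := by
    rwa [Submodule.mem_comap, map_sub, ← hab, add_sub_cancel_right]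
  exact Submodule.mem_sup.2 ⟨x - b, hxb, b, hb, sub_add_cancel x b⟩

variable [IsAlgClosed k] [FiniteDimensional k M]

lemma exists_eq_add_apply (hq : 1 < q) (hτ : ∀ a, τ a ^ q = a) (W : M →ₛₗ[τ] M) (z : M) :
    ∃ x, x = z + W x := by
  obtain ⟨m, -, c, hz⟩ := exists_linearIndependent_and_eq_sum (k := k) fun j ↦ W^[j] z
  obtain ⟨t, ht⟩ := exists_pow_eq_sum_add hq m (fun l ↦ c l ^ q ^ (l + 1)) 1
  exact ⟨_, by simpa only [map_one, one_smul] using sum_krylovCoeff_smul_iterate hτ W hz ht⟩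

lemma exists_ne_zero_apply_eq_self [Nontrivial M] (hq : 1 < q) (hτ : ∀ a, τ a ^ q = a)
    {W : M →ₛₗ[τ] M} (hW : Function.Injective W) : ∃ x, x ≠ 0 ∧ W x = x := by
  obtain ⟨z, hz0⟩ := exists_ne (0 : M)
  obtain ⟨m, hindep, c, hz⟩ := exists_linearIndependent_and_eq_sum (k := k) fun j ↦ W^[j] z
  obtain ⟨l, hl, hcl⟩ : ∃ l < m, c l ≠ 0 := by
    by_contra! hc
    have hWz : W^[m] z = 0 :=
      hz.trans (Finset.sum_eq_zero fun j hj ↦ by rw [hc j (Finset.mem_range.1 hj), zero_smul])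
    exact hz0 (hW.iterate m (hWz.trans (iterate_map_zero W m).symm))
  obtain ⟨t, ht0, ht⟩ := exists_ne_zero_pow_eq_sum (e := fun l ↦ c l ^ q ^ (l + 1)) hq hl
    (pow_ne_zero _ hcl)
  have ht : t ^ q ^ m = ∑ l ∈ Finset.range m, c l ^ q ^ (l + 1) * t ^ q ^ l + 0 := by
    rw [ht, add_zero]
  have hfixed := sum_krylovCoeff_smul_iterate hτ W hz ht
  rw [map_zero, zero_smul, zero_add] at hfixed
  refine ⟨_, fun hx0 ↦ ht0 ?_, hfixed.symm⟩
  rw [Finset.sum_range] at hx0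
  have hlast := Fintype.linearIndependent_iff.1 hindep _ hx0 ⟨m - 1, by lia⟩
  rwa [Nat.sub_add_cancel (by lia), krylovCoeff_self hτ ht] at hlast

lemma exists_notMem_apply_eq_self (hq : 1 < q) (hτ : ∀ a, τ a ^ q = a) {W : M →ₛₗ[τ] M}
    {Y : Submodule k M} (hY : Y.comap W = Y) (hY_top : Y ≠ ⊤) : ∃ x, x ∉ Y ∧ W x = x := by
  have : Nontrivial (M ⧸ Y) := Submodule.Quotient.nontrivial_iff.2 hY_top
  have hinj : Function.Injective (Y.mapQ Y W hY.ge) := by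
    rw [← LinearMap.ker_eq_bot, Submodule.ker_mapQ, hY, Submodule.mkQ_map_self]
  obtain ⟨xbar, hxbar0, hxbar⟩ := exists_ne_zero_apply_eq_self hq hτ hinj
  obtain ⟨x, rfl⟩ := Y.mkQ_surjective xbar
  have hWx : W x - x ∈ Y := (Submodule.Quotient.eq Y).1 hxbar
  obtain ⟨y, hy⟩ := exists_eq_add_apply hq hτ
    (W.restrict (p := Y) (q := Y) fun _ h ↦ hY.ge h) ⟨W x - x, hWx⟩
  have hy : (y : M) = W x - x + W y := congrArg Subtype.val hy
  refine ⟨x + y, fun hxy ↦ hxbar0 ?_, ?_⟩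
  · exact (Submodule.Quotient.mk_eq_zero Y).2 ((Y.add_mem_iff_left y.2).1 hxy)
  · rw [map_add]
    nth_rewrite 2 [hy]
    abel

lemma sup_span_fixed_eq_top [RingHomSurjective τ] (hq : 1 < q) (hτ : ∀ a, τ a ^ q = a)
    {W : M →ₛₗ[τ] M} {Y : Submodule k M} (hY : Y.comap W = Y) :
    Y ⊔ Submodule.span k {x | W x = x} = ⊤ := by
  by_contra htop
  have hspan : (Submodule.span k {x | W x = x}).map W = Submodule.span k {x | W x = x} := by
    rw [Submodule.map_span]
    exact congrArg _ ((Set.image_congr fun _ hx ↦ hx).trans (Set.image_id _))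
  have hcomap : (Y ⊔ Submodule.span k {x | W x = x}).comap W =
      Y ⊔ Submodule.span k {x | W x = x} := by
    nth_rewrite 1 [← hspan]
    rw [comap_sup_map, hY]
  obtain ⟨x, hx, hWx⟩ := exists_notMem_apply_eq_self hq hτ hcomap htop
  exact hx (Submodule.mem_sup_right (Submodule.subset_span hWx))

theorem le_sup_span_fixed [RingHomSurjective τ] (hq : 1 < q) (hτ : ∀ a, τ a ^ q = a)
    {W : M →ₛₗ[τ] M} {Y Z : Submodule k M} (hZ : Z ≤ Z.comap W) (hY : Z ⊓ Y.comap W = Y) :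
    Z ≤ Y ⊔ Submodule.span k {x | x ∈ Z ∧ W x = x} := by
  let W' : Z →ₛₗ[τ] Z := W.restrict (p := Z) (q := Z) fun _ h ↦ hZ h
  have hY' : (Y.comap Z.subtype).comap W' = Y.comap Z.subtype := by
    ext z
    exact ⟨fun h ↦ hY.le ⟨z.2, h⟩, fun h ↦ (hY.ge h).2⟩
  have htop := congrArg (Submodule.map Z.subtype) (sup_span_fixed_eq_top hq hτ hY')
  rw [Submodule.map_sup, Submodule.map_top, Submodule.range_subtype, Submodule.map_span] at htop
  refine htop.ge.trans (sup_le_sup (Submodule.map_comap_le _ _) (Submodule.span_mono ?_))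
  rintro _ ⟨z, hz, rfl⟩
  exact ⟨z.2, congrArg Subtype.val hz⟩

end FixedVectors

end Lang

/-! ### Subquotients permuted by semilinear maps -/

section BlockSystem

variable {k : Type*} [Field k] {M : Type*} [AddCommGroup M] [Module k M]

section RelativeDimension

variable [FiniteDimensional k M] {lo hi : Submodule k M} {d : ℕ}

lemma finrank_map_mkQ (hle : lo ≤ hi) (hd : finrank k hi = finrank k lo + d) :
    finrank k (hi.map lo.mkQ) = d := by
  have hrank := LinearMap.finrank_range_add_finrank_ker (lo.mkQ.domRestrict hi)
  rw [LinearMap.range_domRestrict, LinearMap.ker_domRestrict, Submodule.ker_mkQ,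
    (Submodule.comapSubtypeEquivOfLe hle).finrank_eq, hd] at hrank
  lia

lemma exists_fin_le_sup_span (hle : lo ≤ hi) (hd : finrank k hi = finrank k lo + d) {S : Set M}
    (hS : S ⊆ hi) (hspan : hi ≤ lo ⊔ Submodule.span k S) :
    ∃ u : Fin d → M, (∀ j, u j ∈ S) ∧ hi ≤ lo ⊔ Submodule.span k (Set.range u) := by
  have hmap : hi.map lo.mkQ = Submodule.span k (lo.mkQ '' S) := by
    rw [← Submodule.map_span]
    refine le_antisymm ((Submodule.map_mono hspan).trans ?_)
      (Submodule.map_mono (Submodule.span_le.2 hS))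
    rw [Submodule.map_sup, Submodule.mkQ_map_self, bot_sup_eq]
  obtain rfl : finrank k (Submodule.span k (lo.mkQ '' S)) = d := by
    rw [← hmap, finrank_map_mkQ hle hd]
  obtain ⟨ubar, hubar, hspan_ubar, -⟩ :=
    Submodule.exists_fun_fin_finrank_span_eq k (lo.mkQ '' S)
  choose u huS hu using hubar
  refine ⟨u, huS, ?_⟩
  rw [← Submodule.comap_map_mkQ, ← Submodule.map_le_iff_le_comap, Submodule.map_span,
    ← Set.range_comp, show lo.mkQ ∘ u = ubar from funext hu, hspan_ubar, hmap]

lemma finrank_le_add_of_le_sup_span {u : Fin d → M}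
    (hspan : hi ≤ lo ⊔ Submodule.span k (Set.range u)) : finrank k hi ≤ finrank k lo + d :=
  calc finrank k hi ≤ finrank k ↥(lo ⊔ Submodule.span k (Set.range u)) :=
        Submodule.finrank_mono hspan
    _ ≤ finrank k lo + finrank k (Submodule.span k (Set.range u)) :=
        Submodule.finrank_add_le_finrank_add_finrank _ _
    _ ≤ finrank k lo + d := by
        gcongr
        exact (finrank_range_le_card u).trans_eq (Fintype.card_fin d)

end RelativeDimension

variable {ι : Type*} {τ : k →+* k} {ρ : Equiv.Perm ι} {lo hi : ι → Submodule k M}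
  {step : ι → M →ₛₗ[τ] M}

/-- A family of semilinear maps `step i` which induce injections
`hi i ⧸ lo i → hi (ρ i) ⧸ lo (ρ i)` between subquotients permuted by `ρ`. -/
structure IsBlockSystem (ρ : Equiv.Perm ι) (lo hi : ι → Submodule k M)
    (step : ι → M →ₛₗ[τ] M) : Prop where
  hi_le_comap : ∀ i, hi i ≤ (hi (ρ i)).comap (step i)
  inf_comap : ∀ i, hi i ⊓ (lo (ρ i)).comap (step i) = lo i

/-- A family of vectors, one in each `hi i`, carried to each other by the maps `step i`. -/
def IsThread (ρ : Equiv.Perm ι) (hi : ι → Submodule k M) (step : ι → M →ₛₗ[τ] M)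
    (x : ι → M) : Prop :=
  ∀ i, x i ∈ hi i ∧ step i (x i) = x (ρ i)

/-- The semilinear endomorphism of `ι → M` assembled from the maps `step i`; its fixed points in
`∏ i, hi i` are the threads. -/
def assembledStep (ρ : Equiv.Perm ι) (step : ι → M →ₛₗ[τ] M) : (ι → M) →ₛₗ[τ] (ι → M) where
  toFun x i := step (ρ.symm i) (x (ρ.symm i))
  map_add' x y := by ext i; simp
  map_smul' a x := by ext i; simp

lemma isThread_iff {x : ι → M} : IsThread ρ hi step x ↔
    x ∈ Submodule.pi Set.univ hi ∧ assembledStep ρ step x = x := by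
  rw [IsThread, forall_and, funext_iff, ← ρ.forall_congr_right (q := fun i ↦ _ = x i)]
  simp [assembledStep]

namespace IsBlockSystem

lemma lo_le_hi (B : IsBlockSystem ρ lo hi step) (i : ι) : lo i ≤ hi i :=
  (B.inf_comap i).ge.trans inf_le_left

variable [RingHomSurjective τ]

lemma le_sup_span_eval (B : IsBlockSystem ρ lo hi step) {S : Set (ι → M)}
    (hS : ∀ x ∈ S, IsThread ρ hi step x) {i : ι}
    (hspan : hi (ρ i) ≤ lo (ρ i) ⊔ Submodule.span k (Function.eval (ρ i) '' S)) :
    hi i ≤ lo i ⊔ Submodule.span k (Function.eval i '' S) := by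
  have hmap : (Submodule.span k (Function.eval i '' S)).map (step i) =
      Submodule.span k (Function.eval (ρ i) '' S) := by
    rw [Submodule.map_span, Set.image_image]
    exact congrArg _ (Set.image_congr fun x hx ↦ (hS x hx i).2)
  have hle : Submodule.span k (Function.eval i '' S) ≤ hi i :=
    Submodule.span_le.2 (Set.image_subset_iff.2 fun x hx ↦ (hS x hx i).1)
  calc hi i ≤ hi i ⊓ (lo (ρ i) ⊔ Submodule.span k (Function.eval (ρ i) '' S)).comap (step i) :=
        le_inf le_rfl ((B.hi_le_comap i).trans (Submodule.comap_mono hspan))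
    _ = hi i ⊓ (lo (ρ i)).comap (step i) ⊔ Submodule.span k (Function.eval i '' S) := by
        rw [← hmap, comap_sup_map, inf_sup_assoc_of_le _ hle]
    _ = lo i ⊔ Submodule.span k (Function.eval i '' S) := by rw [B.inf_comap]

variable [Finite ι]

lemma le_sup_span_eval_of_sameCycle (B : IsBlockSystem ρ lo hi step) {S : Set (ι → M)}
    (hS : ∀ x ∈ S, IsThread ρ hi step x) {i i₀ : ι} (hcycle : ρ.SameCycle i i₀)
    (hspan : hi i₀ ≤ lo i₀ ⊔ Submodule.span k (Function.eval i₀ '' S)) :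
    hi i ≤ lo i ⊔ Submodule.span k (Function.eval i '' S) := by
  obtain ⟨n, rfl⟩ := hcycle.exists_nat_pow_eq
  clear hcycle
  induction n generalizing i with
  | zero => exact hspan
  | succ n ih => exact B.le_sup_span_eval hS (ih hspan)

variable [FiniteDimensional k M] [IsAlgClosed k] {q : ℕ}

lemma le_sup_span_threads (B : IsBlockSystem ρ lo hi step) (hq : 1 < q) (hτ : ∀ a, τ a ^ q = a)
    (i : ι) : hi i ≤ lo i ⊔ Submodule.span k (Function.eval i '' {x | IsThread ρ hi step x}) := by
  classical
  have hhi : Submodule.pi Set.univ hi ≤ (Submodule.pi Set.univ hi).comap (assembledStep ρ step) :=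
    fun x hx j _ ↦ by
      simpa [assembledStep] using B.hi_le_comap (ρ.symm j) (hx (ρ.symm j) trivial)
  have hlo : Submodule.pi Set.univ hi ⊓
      (Submodule.pi Set.univ lo).comap (assembledStep ρ step) = Submodule.pi Set.univ lo := by
    ext x
    have hlo_iff (j : ι) : x j ∈ hi j ∧ step j (x j) ∈ lo (ρ j) ↔ x j ∈ lo j :=
      SetLike.ext_iff.1 (B.inf_comap j) (x j)
    simp only [Submodule.mem_inf, Submodule.mem_comap, Submodule.mem_pi, Set.mem_univ,
      true_imp_iff, ← hlo_iff, forall_and]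
    rw [← ρ.forall_congr_right (q := fun j ↦ assembledStep ρ step x j ∈ lo j)]
    simp [assembledStep]
  have hfixed := le_sup_span_fixed hq hτ hhi hlo
  simp_rw [← isThread_iff] at hfixed
  intro y hy
  have hsingle : Pi.single i y ∈ Submodule.pi Set.univ hi := fun j _ ↦ by
    obtain rfl | hji := eq_or_ne j i
    · simpa using hy
    · simp [hji]
  have hmap := Submodule.mem_map_of_mem (f := LinearMap.proj i) (hfixed hsingle)
  rw [Submodule.map_sup, Submodule.map_span, LinearMap.proj_apply, Pi.single_eq_same] at hmap
  have hlo_map : (Submodule.pi Set.univ lo).map (LinearMap.proj i) ≤ lo i :=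
    Submodule.map_le_iff_le_comap.2 fun x hx ↦ hx i trivial
  exact SetLike.le_def.1 (sup_le_sup_right hlo_map _) hmap

variable {d : ι → ℕ}

lemma exists_threads (B : IsBlockSystem ρ lo hi step) (hq : 1 < q) (hτ : ∀ a, τ a ^ q = a)
    (hd : ∀ i, finrank k (hi i) = finrank k (lo i) + d i) (i₀ : ι) :
    ∃ x : Fin (d i₀) → ι → M, (∀ j, IsThread ρ hi step (x j)) ∧ ∀ i, ρ.SameCycle i i₀ →
      hi i ≤ lo i ⊔ Submodule.span k (Set.range fun j ↦ x j i) := by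
  obtain ⟨u, hu, hspan⟩ := exists_fin_le_sup_span (B.lo_le_hi i₀) (hd i₀)
    (Set.image_subset_iff.2 fun x hx ↦ (hx i₀).1) (B.le_sup_span_threads hq hτ i₀)
  choose x hx hxu using hu
  have hrange (i : ι) : Function.eval i '' Set.range x = Set.range fun j ↦ x j i :=
    (Set.range_comp _ _).symm
  refine ⟨x, hx, fun i hcycle ↦ ?_⟩
  rw [← hrange]
  refine B.le_sup_span_eval_of_sameCycle (by rintro _ ⟨j, rfl⟩; exact hx j) hcycle ?_
  rwa [hrange, show (fun j ↦ x j i₀) = u from funext hxu]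

lemma blockDim_eq_of_sameCycle (B : IsBlockSystem ρ lo hi step) (hq : 1 < q)
    (hτ : ∀ a, τ a ^ q = a) (hd : ∀ i, finrank k (hi i) = finrank k (lo i) + d i) {i i' : ι}
    (hcycle : ρ.SameCycle i i') : d i = d i' := by
  suffices hle : ∀ {i i'}, ρ.SameCycle i i' → d i ≤ d i' from
    (hle hcycle).antisymm (hle hcycle.symm)
  intro i i' hcycle
  obtain ⟨x, -, hspan⟩ := B.exists_threads hq hτ hd i'
  have := finrank_le_add_of_le_sup_span (hspan i hcycle)
  rw [hd] at this
  lia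

theorem exists_compatible_vectors (B : IsBlockSystem ρ lo hi step) (hq : 1 < q)
    (hτ : ∀ a, τ a ^ q = a) (hd : ∀ i, finrank k (hi i) = finrank k (lo i) + d i) :
    ∃ hdρ : ∀ i, d i = d (ρ i), ∃ x : ∀ i, Fin (d i) → M,
      (∀ i j, x i j ∈ hi i ∧ step i (x i j) = x (ρ i) (j.cast (hdρ i))) ∧
      ∀ i, hi i ≤ lo i ⊔ Submodule.span k (Set.range (x i)) := by
  choose x hx hspan using B.exists_threads hq hτ hd
  let rep (i : ι) : ι := (Quotient.mk (Equiv.Perm.SameCycle.setoid ρ) i).out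
  have hrep (i : ι) : ρ.SameCycle i (rep i) :=
    (Quotient.mk_out (s := Equiv.Perm.SameCycle.setoid ρ) i).symm
  have hcycle (i : ι) : ρ.SameCycle i (ρ i) :=
    Equiv.Perm.sameCycle_apply_right.2 (Equiv.Perm.SameCycle.refl ρ i)
  have hrep_apply (i : ι) : rep i = rep (ρ i) :=
    congrArg Quotient.out (Quotient.sound (s := Equiv.Perm.SameCycle.setoid ρ) (hcycle i))
  have hd_rep (i : ι) : d i = d (rep i) := B.blockDim_eq_of_sameCycle hq hτ hd (hrep i)
  have hx_cast {a b : ι} (hab : a = b) (j : Fin (d a)) : x a j = x b (j.cast (congrArg d hab)) := by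
    subst hab
    rfl
  refine ⟨fun i ↦ B.blockDim_eq_of_sameCycle hq hτ hd (hcycle i),
    fun i j ↦ x (rep i) (j.cast (hd_rep i)) i, fun i j ↦ ⟨(hx (rep i) _ i).1, ?_⟩, fun i ↦ ?_⟩
  · rw [(hx (rep i) _ i).2, hx_cast (hrep_apply i)]
    rfl
  · convert hspan (rep i) i (hrep i) using 3
    exact (finCongr (hd_rep i)).surjective.range_comp fun j ↦ x (rep i) j i

end IsBlockSystem

end BlockSystem

/-! ### Semilinear sections -/

section SemilinearSection

variable {k : Type*} [Field k] {M N : Type*} [AddCommGroup M] [Module k M] [AddCommGroup N]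
  [Module k N] {σ τ : k →+* k} [RingHomInvPair σ τ] [RingHomInvPair τ σ]

lemma exists_semilinear_section_range (F : M →ₛₗ[σ] N) :
    ∃ s : N →ₛₗ[τ] M, ∀ y ∈ LinearMap.range F, F (s y) = y := by
  obtain ⟨C, hC⟩ := Submodule.exists_isCompl (LinearMap.ker F)
  have hinj : Function.Injective (F.domRestrict C) :=
    LinearMap.injective_domRestrict_iff.2 hC.disjoint.symm
  have hrange : LinearMap.range (F.domRestrict C) = LinearMap.range F := by
    rw [LinearMap.range_domRestrict, Submodule.map_eq_range_iff]
    exact hC.codisjoint.symm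
  let e := LinearEquiv.ofInjective (F.domRestrict C) hinj
  obtain ⟨P, hP⟩ := LinearMap.exists_extend (LinearMap.id (M := LinearMap.range (F.domRestrict C)))
  refine ⟨C.subtype.comp (e.symm.toLinearMap.comp P), fun y hy ↦ ?_⟩
  rw [← hrange] at hy
  have hPy : P y = ⟨y, hy⟩ := LinearMap.congr_fun hP ⟨y, hy⟩
  have hey : F (e.symm ⟨y, hy⟩) = y := congrArg Subtype.val (e.apply_symm_apply ⟨y, hy⟩)
  simpa [hPy] using hey

lemma exists_semilinear_section_map (F : M →ₛₗ[σ] N) (A : Submodule k M) :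
    ∃ s : N →ₛₗ[τ] M, ∀ y ∈ A.map F, s y ∈ A ∧ F (s y) = y := by
  obtain ⟨s, hs⟩ := exists_semilinear_section_range (τ := τ) (F.domRestrict A)
  rw [LinearMap.range_domRestrict] at hs
  exact ⟨A.subtype.comp s, fun y hy ↦ ⟨(s y).2, hs y hy⟩⟩

lemma exists_semilinear_section_map_of_le (F : M →ₛₗ[σ] N) {lo hi : Submodule k M}
    (hle : lo ≤ hi) :
    ∃ s : N →ₛₗ[τ] M, (∀ y ∈ lo.map F, s y ∈ lo) ∧ ∀ y ∈ hi.map F, s y ∈ hi ∧ F (s y) = y := by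
  obtain ⟨slo, hslo⟩ := exists_semilinear_section_map (τ := τ) F lo
  obtain ⟨shi, hshi⟩ := exists_semilinear_section_map (τ := τ) F hi
  obtain ⟨P, hP⟩ := LinearMap.exists_extend (LinearMap.id (M := lo.map F))
  have hP_self (y : N) (hy : y ∈ lo.map F) : (P y : N) = y :=
    congrArg Subtype.val (LinearMap.congr_fun hP ⟨y, hy⟩)
  let s : N →ₛₗ[τ] M := slo.comp ((lo.map F).subtype ∘ₗ P) +
    shi.comp (LinearMap.id - (lo.map F).subtype ∘ₗ P)
  have hs (y : N) : s y = slo (P y) + shi (y - P y) := rfl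
  refine ⟨s, fun y hy ↦ ?_, fun y hy ↦ ?_⟩
  · rw [hs, hP_self y hy, sub_self, map_zero, add_zero]
    exact (hslo y hy).1
  · obtain ⟨hlo_mem, hlo_eq⟩ := hslo (P y) (P y).2
    obtain ⟨hhi_mem, hhi_eq⟩ := hshi (y - P y) (sub_mem hy (Submodule.map_mono hle (P y).2))
    exact ⟨add_mem (hle hlo_mem) hhi_mem, by rw [hs, map_add, hlo_eq, hhi_eq, add_sub_cancel]⟩

end SemilinearSection

/-! ### Gaps of a finite chain -/

section Combinatorics

variable {r : ℕ}

/-- `h` sends the endpoints of the `j`-th gap of `Fin (r + 1)` to those of the `i`-th gap. -/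
def MapsGap (h : Fin (r + 1) → Fin (r + 1)) (j i : Fin r) : Prop :=
  h j.castSucc = i.castSucc ∧ h j.succ = i.succ

lemma exists_mapsGap {h : Fin (r + 1) → Fin (r + 1)} (hh : Monotone h) {i : Fin r}
    (hlo : i.castSucc ∈ Set.range h) (hhi : i.succ ∈ Set.range h) : ∃ j, MapsGap h j i := by
  obtain ⟨s, hs⟩ := hlo
  obtain ⟨t, ht⟩ := hhi
  obtain ⟨j, hj_le, hj_lt⟩ : ∃ j : Fin r, h j.castSucc ≤ i.castSucc ∧ i.castSucc < h j.succ := by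
    by_contra! hstep
    have hle : ∀ l, h l ≤ i.castSucc :=
      Fin.induction (hs ▸ hh (Fin.zero_le s)) fun l hl ↦ hstep l hl
    exact (ht ▸ hle t).not_gt Fin.castSucc_lt_succ
  have hsj : s ≤ j.castSucc := by
    by_contra! hjs
    exact hj_lt.not_ge (hs ▸ hh (Fin.castSucc_lt_iff_succ_le.1 hjs))
  have hjt : j.succ ≤ t := by
    rw [← Fin.castSucc_lt_iff_succ_le]
    by_contra! htj
    exact (ht ▸ (hh htj).trans hj_le).not_gt Fin.castSucc_lt_succ
  exact ⟨j, hj_le.antisymm (hs ▸ hh hsj),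
    (ht ▸ hh hjt).antisymm (Fin.castSucc_lt_iff_succ_le.1 hj_lt)⟩

lemma eq_of_castSucc_eq_of_lt {h : Fin (r + 1) → Fin (r + 1)} (hh : Monotone h) {j j' : Fin r}
    (heq : h j.castSucc = h j'.castSucc) (hj : h j.castSucc < h j.succ)
    (hj' : h j'.castSucc < h j'.succ) : j = j' := by
  rcases lt_trichotomy j j' with hlt | rfl | hlt
  · exact absurd (hh (Fin.succ_le_castSucc_iff.2 hlt)) (heq ▸ hj).not_ge
  · rfl
  · exact absurd (hh (Fin.succ_le_castSucc_iff.2 hlt)) (heq ▸ hj').not_ge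

lemma MapsGap.eq_of_lt {h : Fin (r + 1) → Fin (r + 1)} (hh : Monotone h) {i j j' : Fin r}
    (hji : MapsGap h j i) (heq : h j'.castSucc = i.castSucc) (hj' : h j'.castSucc < h j'.succ) :
    j = j' := by
  refine eq_of_castSucc_eq_of_lt hh (hji.1.trans heq.symm) ?_ hj'
  rw [hji.1, hji.2]
  exact Fin.castSucc_lt_succ

variable {f v : Fin (r + 1) → Fin (r + 1)}

/-- `ρ` inverts the partial bijections of gaps induced by `f`, whose values fill the gaps below
`f (Fin.last r)`, and by `v`, whose values fill the gaps above. -/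
def IsGapPerm (f v : Fin (r + 1) → Fin (r + 1)) (ρ : Equiv.Perm (Fin r)) : Prop :=
  ∀ i, (i.castSucc < f (Fin.last r) → MapsGap f (ρ i) i) ∧
    (¬ i.castSucc < f (Fin.last r) → MapsGap v (ρ i) i)

theorem exists_isGapPerm (hf : Monotone f) (hv : Monotone v) (hfv : f (Fin.last r) = v 0)
    (hrange : ∀ i, i ∈ Set.range f ∨ i ∈ Set.range v)
    (hlt : ∀ j : Fin r, f j.castSucc < f j.succ ∨ v j.castSucc < v j.succ) :
    ∃ ρ, IsGapPerm f v ρ := by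
  have mem_range_f {i} (hi : i ≤ f (Fin.last r)) : i ∈ Set.range f :=
    (hrange i).elim id fun ⟨j, hj⟩ ↦
      ⟨Fin.last r, (hfv.trans_le (hj ▸ hv (Fin.zero_le j))).antisymm hi⟩
  have mem_range_v {i} (hi : f (Fin.last r) ≤ i) : i ∈ Set.range v :=
    (hrange i).elim (fun ⟨j, hj⟩ ↦ ⟨0, (hfv ▸ hi).antisymm (hj ▸ hfv ▸ hf (Fin.le_last j))⟩) id
  have hgap (i : Fin r) : ∃ j, (i.castSucc < f (Fin.last r) → MapsGap f j i) ∧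
      (¬ i.castSucc < f (Fin.last r) → MapsGap v j i) := by
    by_cases hi : i.castSucc < f (Fin.last r)
    · obtain ⟨j, hj⟩ := exists_mapsGap hf (mem_range_f hi.le)
        (mem_range_f (Fin.castSucc_lt_iff_succ_le.1 hi))
      exact ⟨j, fun _ ↦ hj, fun h ↦ absurd hi h⟩
    · have hi' := not_lt.1 hi
      obtain ⟨j, hj⟩ := exists_mapsGap hv (mem_range_v hi')
        (mem_range_v (hi'.trans Fin.castSucc_lt_succ.le))
      exact ⟨j, fun h ↦ absurd h hi, fun _ ↦ hj⟩
  choose ρ hρ using hgap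
  have hsurj : Function.Surjective ρ := fun j ↦ by
    rcases hlt j with hj | hj
    · obtain ⟨i, hi⟩ := Fin.exists_castSucc_eq.2 (hj.trans_le (Fin.le_last _)).ne
      have hi_lt : i.castSucc < f (Fin.last r) := hi ▸ hj.trans_le (hf (Fin.le_last _))
      exact ⟨i, ((hρ i).1 hi_lt).eq_of_lt hf hi.symm hj⟩
    · obtain ⟨i, hi⟩ := Fin.exists_castSucc_eq.2 (hj.trans_le (Fin.le_last _)).ne
      have hi_ge : ¬ i.castSucc < f (Fin.last r) :=
        not_lt.2 (hi ▸ hfv ▸ hv (Fin.zero_le _))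
      exact ⟨i, ((hρ i).2 hi_ge).eq_of_lt hv hi.symm hj⟩
  exact ⟨Equiv.ofBijective ρ (Finite.surjective_iff_bijective.1 hsurj), hρ⟩

end Combinatorics

/-! ### Standard bases -/

section StandardBasis

variable {k : Type*} [Field k] {σ τ : k →+* k} {I : Type*} {π : Equiv.Perm I} {T : Set I}
  {M : Type*} [AddCommGroup M] [Module k M] {F : M →ₛₗ[σ] M} {V : M →ₛₗ[τ] M} {b : Basis I k M}
  {M' : Type*} [AddCommGroup M'] [Module k M'] {F' : M' →ₛₗ[σ] M'} {V' : M' →ₛₗ[τ] M'}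
  {b' : Basis I k M'}

/-- A basis that exhibits `(M, F, V)` as a standard Dieudonné space: an arrow joins `q` and `π q`,
and `F` runs backwards along the arrows with `q ∈ T`, while `V` runs forwards along the others. -/
structure IsStandardBasis (F : M →ₛₗ[σ] M) (V : M →ₛₗ[τ] M) (π : Equiv.Perm I) (T : Set I)
    (b : Basis I k M) : Prop where
  map_F : ∀ q ∈ T, F (b (π q)) = b q
  map_V : ∀ q ∉ T, V (b q) = b (π q)

lemma IsStandardBasis.map_F_of_notMem (hb : IsStandardBasis F V π T b)
    (hFV : ∀ x, F (V x) = 0) {q : I} (hq : q ∉ T) : F (b (π q)) = 0 :=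
  hb.map_V q hq ▸ hFV _

lemma IsStandardBasis.map_V_of_mem (hb : IsStandardBasis F V π T b)
    (hVF : ∀ x, V (F x) = 0) {q : I} (hq : q ∈ T) : V (b q) = 0 :=
  hb.map_F q hq ▸ hVF _

theorem IsStandardBasis.exists_linearEquiv (hb : IsStandardBasis F V π T b)
    (hb' : IsStandardBasis F' V' π T b') (hFV : ∀ x, F (V x) = 0) (hVF : ∀ x, V (F x) = 0)
    (hFV' : ∀ x, F' (V' x) = 0) (hVF' : ∀ x, V' (F' x) = 0) :
    ∃ α : M ≃ₗ[k] M', (∀ x, α (F x) = F' (α x)) ∧ ∀ x, α (V x) = V' (α x) := by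
  let α := b.equiv b' (Equiv.refl I)
  have hα (q : I) : α (b q) = b' q := b.equiv_apply q b' _
  have hF : α.toLinearMap.comp F = F'.comp α.toLinearMap := b.ext fun q ↦ by
    obtain ⟨q, rfl⟩ := π.surjective q
    by_cases hq : q ∈ T
    · simp [hα, hb.map_F q hq, hb'.map_F q hq]
    · simp [hα, hb.map_F_of_notMem hFV hq, hb'.map_F_of_notMem hFV' hq]
  have hV : α.toLinearMap.comp V = V'.comp α.toLinearMap := b.ext fun q ↦ by
    by_cases hq : q ∈ T
    · simp [hα, hb.map_V_of_mem hVF hq, hb'.map_V_of_mem hVF' hq]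
    · simp [hα, hb.map_V q hq, hb'.map_V q hq]
  exact ⟨α, LinearMap.congr_fun hF, LinearMap.congr_fun hV⟩

end StandardBasis

/-! ### The canonical flag -/

section CanonicalFlag

variable {k : Type*} [Field k] {σ τ : k →+* k} [RingHomSurjective σ]
  {M : Type*} [AddCommGroup M] [Module k M] {F : M →ₛₗ[σ] M} {V : M →ₛₗ[τ] M}
  {r : ℕ} {f v : Fin (r + 1) → Fin (r + 1)} {G : Fin (r + 1) → Submodule k M}

lemma le_of_map_le_of_comap_le [RingHomSurjective τ] (hFV : LinearMap.ker F ≤ LinearMap.range V)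
    {A B : Submodule k M} (hAB : A ≤ B) (hmap : B.map F ≤ A.map F)
    (hcomap : B.comap V ≤ A.comap V) : B ≤ A := by
  intro y hy
  obtain ⟨a, ha, hay⟩ := hmap ⟨y, hy, rfl⟩
  obtain ⟨u, hu⟩ : y - a ∈ LinearMap.range V :=
    hFV (by rw [LinearMap.mem_ker, map_sub, hay, sub_self])
  have huA : V u ∈ A := hcomap (by
    rw [Submodule.mem_comap, hu]
    exact sub_mem hy (hAB ha))
  rw [hu] at huA
  exact (A.sub_mem_iff_left ha).1 huA

/-- A complete list `⊥ = G 0 < ⋯ < G r = ⊤` of the members of the canonical flag, on whose indices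
`F` and `V⁻¹` act by `f` and `v`. The last field holds as the canonical flag is the smallest one
stable under `F` and `V⁻¹`. -/
structure IsCanonicalFlag (F : M →ₛₗ[σ] M) (V : M →ₛₗ[τ] M) (f v : Fin (r + 1) → Fin (r + 1))
    (G : Fin (r + 1) → Submodule k M) : Prop where
  strictMono : StrictMono G
  zero : G 0 = ⊥
  last : G (Fin.last r) = ⊤
  map_F : ∀ i, (G i).map F = G (f i)
  comap_V : ∀ i, (G i).comap V = G (v i)
  mem_range : ∀ i, i ∈ Set.range f ∨ i ∈ Set.range v

namespace IsCanonicalFlag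

lemma monotone_f (H : IsCanonicalFlag F V f v G) : Monotone f := fun i j hij ↦ by
  rw [← H.strictMono.le_iff_le, ← H.map_F, ← H.map_F]
  exact Submodule.map_mono (H.strictMono.monotone hij)

lemma monotone_v (H : IsCanonicalFlag F V f v G) : Monotone v := fun i j hij ↦ by
  rw [← H.strictMono.le_iff_le, ← H.comap_V, ← H.comap_V]
  exact Submodule.comap_mono (H.strictMono.monotone hij)

lemma f_last (H : IsCanonicalFlag F V f v G) (hVF : LinearMap.ker V = LinearMap.range F) :
    f (Fin.last r) = v 0 :=
  H.strictMono.injective <| by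
    rw [← H.map_F, ← H.comap_V, H.last, H.zero, Submodule.map_top, Submodule.comap_bot, hVF]

lemma f_lt_or_v_lt [RingHomSurjective τ] (H : IsCanonicalFlag F V f v G)
    (hFV : LinearMap.ker F ≤ LinearMap.range V) (j : Fin r) :
    f j.castSucc < f j.succ ∨ v j.castSucc < v j.succ := by
  by_contra! hle
  have hlt := H.strictMono (Fin.castSucc_lt_succ (i := j))
  refine hlt.not_ge (le_of_map_le_of_comap_le hFV hlt.le ?_ ?_)
  · rw [H.map_F, H.map_F]
    exact H.strictMono.monotone hle.1
  · rw [H.comap_V, H.comap_V]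
    exact H.strictMono.monotone hle.2

lemma exists_isGapPerm [RingHomSurjective τ] (H : IsCanonicalFlag F V f v G)
    (hFV : LinearMap.ker F ≤ LinearMap.range V) (hVF : LinearMap.ker V = LinearMap.range F) :
    ∃ ρ, IsGapPerm f v ρ :=
  Kraft.exists_isGapPerm H.monotone_f H.monotone_v (H.f_last hVF) H.mem_range
    (H.f_lt_or_v_lt hFV)

lemma top_le_span {d : Fin r → ℕ} (H : IsCanonicalFlag F V f v G) {x : ∀ i, Fin (d i) → M}
    (hx : ∀ i, G i.succ ≤ G i.castSucc ⊔ Submodule.span k (Set.range (x i))) :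
    ⊤ ≤ Submodule.span k (Set.range fun q : Σ i, Fin (d i) ↦ x q.1 q.2) := by
  rw [← H.last]
  refine Fin.induction (motive := fun i ↦ G i ≤ _) (H.zero.trans_le bot_le) (fun i hi ↦ ?_) _
  refine (hx i).trans (sup_le hi (Submodule.span_mono ?_))
  rintro _ ⟨j, rfl⟩
  exact ⟨⟨i, j⟩, rfl⟩

lemma sum_eq_finrank {d : Fin r → ℕ} (H : IsCanonicalFlag F V f v G)
    (hd : ∀ i, finrank k (G i.succ) = finrank k (G i.castSucc) + d i) :
    ∑ i, d i = finrank k M := by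
  have htelescope := Fin.sum_univ_succ fun i ↦ finrank k (G i)
  rw [Fin.sum_univ_castSucc] at htelescope
  simp only [hd, Finset.sum_add_distrib] at htelescope
  have hzero : finrank k (G 0) = 0 := by rw [H.zero, finrank_bot]
  have hlast : finrank k (G (Fin.last r)) = finrank k M := by rw [H.last, finrank_top]
  lia

end IsCanonicalFlag

end CanonicalFlag

section CanonicalFlagBasis

variable {k : Type*} [Field k] {σ τ : k →+* k} [RingHomInvPair σ τ] [RingHomInvPair τ σ]
  {M : Type*} [AddCommGroup M] [Module k M] {F : M →ₛₗ[σ] M} {V : M →ₛₗ[τ] M}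
  {r : ℕ} {f v : Fin (r + 1) → Fin (r + 1)} {G : Fin (r + 1) → Submodule k M}
  {ρ : Equiv.Perm (Fin r)} {d : Fin r → ℕ}

/-- The permutation of `Σ i, Fin (d i)` that permutes the summands by `ρ`, preserving positions
within them. -/
def sigmaPerm (ρ : Equiv.Perm (Fin r)) (hdρ : ∀ i, d i = d (ρ i)) :
    Equiv.Perm (Σ i, Fin (d i)) :=
  Equiv.sigmaCongr ρ fun i ↦ finCongr (hdρ i)

namespace IsCanonicalFlag

lemma exists_isBlockSystem (H : IsCanonicalFlag F V f v G) (hρ : IsGapPerm f v ρ) :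
    ∃ step : Fin r → M →ₛₗ[τ] M,
      IsBlockSystem ρ (fun i ↦ G i.castSucc) (fun i ↦ G i.succ) step ∧
      (∀ i, i.castSucc < f (Fin.last r) → ∀ y ∈ G i.succ, F (step i y) = y) ∧
      ∀ i, ¬ i.castSucc < f (Fin.last r) → step i = V := by
  have hstep (i : Fin r) : ∃ s : M →ₛₗ[τ] M,
      (G i.succ ≤ (G (ρ i).succ).comap s ∧
        G i.succ ⊓ (G (ρ i).castSucc).comap s = G i.castSucc) ∧
      (i.castSucc < f (Fin.last r) → ∀ y ∈ G i.succ, F (s y) = y) ∧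
      (¬ i.castSucc < f (Fin.last r) → s = V) := by
    have hle (i : Fin r) : G i.castSucc ≤ G i.succ :=
      H.strictMono.monotone Fin.castSucc_lt_succ.le
    by_cases hi : i.castSucc < f (Fin.last r)
    · obtain ⟨hlo, hhi⟩ := (hρ i).1 hi
      obtain ⟨s, hs_lo, hs_hi⟩ := exists_semilinear_section_map_of_le (τ := τ) F (hle (ρ i))
      rw [H.map_F, hlo] at hs_lo
      rw [H.map_F, hhi] at hs_hi
      refine ⟨s, ⟨fun y hy ↦ (hs_hi y hy).1, le_antisymm ?_ (le_inf (hle i) hs_lo)⟩,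
        fun _ y hy ↦ (hs_hi y hy).2, fun h ↦ absurd hi h⟩
      rintro y ⟨hy, hsy⟩
      rw [← hlo, ← H.map_F, ← (hs_hi y hy).2]
      exact Submodule.mem_map_of_mem hsy
    · obtain ⟨hlo, hhi⟩ := (hρ i).2 hi
      refine ⟨V, ⟨?_, ?_⟩, fun h ↦ absurd h hi, fun _ ↦ rfl⟩
      · rw [H.comap_V, hhi]
      · rw [H.comap_V, hlo, inf_eq_right.2 (hle i)]
  choose step hblock hF hV using hstep
  exact ⟨step, ⟨fun i ↦ (hblock i).1, fun i ↦ (hblock i).2⟩, hF, hV⟩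

variable [FiniteDimensional k M] [IsAlgClosed k] {q : ℕ}

theorem exists_isStandardBasis (H : IsCanonicalFlag F V f v G) (hρ : IsGapPerm f v ρ)
    (hq : 1 < q) (hτ : ∀ a, τ a ^ q = a)
    (hd : ∀ i, finrank k (G i.succ) = finrank k (G i.castSucc) + d i) :
    ∃ hdρ : ∀ i, d i = d (ρ i), ∃ b : Basis (Σ i, Fin (d i)) k M,
      IsStandardBasis F V (sigmaPerm ρ hdρ) {s | s.1.castSucc < f (Fin.last r)} b := by
  obtain ⟨step, B, hF, hV⟩ := H.exists_isBlockSystem hρ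
  obtain ⟨hdρ, x, hx, hspan⟩ := B.exists_compatible_vectors hq hτ hd
  refine ⟨hdρ, basisOfTopLeSpanOfCardEqFinrank _ (H.top_le_span hspan) ?_, ?_, ?_⟩
  · simp [H.sum_eq_finrank hd]
  · rintro ⟨i, j⟩ hi
    rw [coe_basisOfTopLeSpanOfCardEqFinrank]
    exact (congrArg F (hx i j).2).symm.trans (hF i hi _ (hx i j).1)
  · rintro ⟨i, j⟩ hi
    rw [coe_basisOfTopLeSpanOfCardEqFinrank, ← hV i hi]
    exact (hx i j).2

variable {M' : Type*} [AddCommGroup M'] [Module k M'] [FiniteDimensional k M']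
  {F' : M' →ₛₗ[σ] M'} {V' : M' →ₛₗ[τ] M'} {G' : Fin (r + 1) → Submodule k M'}

theorem exists_linearEquiv (H : IsCanonicalFlag F V f v G) (H' : IsCanonicalFlag F' V' f v G')
    (hFV : LinearMap.ker F = LinearMap.range V) (hVF : LinearMap.ker V = LinearMap.range F)
    (hFV' : LinearMap.ker F' = LinearMap.range V') (hVF' : LinearMap.ker V' = LinearMap.range F')
    (hq : 1 < q) (hτ : ∀ a, τ a ^ q = a)
    (hdim : ∀ i, finrank k (G i) = finrank k (G' i)) :
    ∃ α : M ≃ₗ[k] M', (∀ x, α (F x) = F' (α x)) ∧ ∀ x, α (V x) = V' (α x) := by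
  obtain ⟨ρ, hρ⟩ := H.exists_isGapPerm hFV.le hVF
  have hd (i : Fin r) : ∃ d, finrank k (G i.succ) = finrank k (G i.castSucc) + d :=
    Nat.exists_eq_add_of_le <|
      Submodule.finrank_mono (H.strictMono.monotone Fin.castSucc_lt_succ.le)
  choose d hd using hd
  obtain ⟨hdρ, b, hb⟩ := H.exists_isStandardBasis hρ hq hτ hd
  obtain ⟨_, b', hb'⟩ := H'.exists_isStandardBasis hρ hq hτ (d := d)
    (by simpa only [hdim] using hd)
  exact hb.exists_linearEquiv hb' (fun x ↦ hFV.ge ⟨x, rfl⟩) (fun x ↦ hVF.ge ⟨x, rfl⟩)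
    (fun x ↦ hFV'.ge ⟨x, rfl⟩) (fun x ↦ hVF'.ge ⟨x, rfl⟩)

end IsCanonicalFlag

end CanonicalFlagBasis

/-! ### Words in `F` and `V⁻¹` -/

section Words

variable {k : Type*} [Field k] {σ τ : k →+* k} [RingHomSurjective σ]
  {M : Type*} [AddCommGroup M] [Module k M] {F : M →ₛₗ[σ] M} {V : M →ₛₗ[τ] M}
  {M' : Type*} [AddCommGroup M'] [Module k M'] {F' : M' →ₛₗ[σ] M'} {V' : M' →ₛₗ[τ] M'}

/-- The subspace obtained from `M` by applying a word in `F` (for `true`) and `V⁻¹` (for `false`),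
reading the word from left to right. -/
def wordSubspace (F : M →ₛₗ[σ] M) (V : M →ₛₗ[τ] M) (w : List Bool) : Submodule k M :=
  w.foldl (fun N b ↦ if b then N.map F else N.comap V) ⊤

lemma wordSubspace_append_true (w : List Bool) :
    wordSubspace F V (w ++ [true]) = (wordSubspace F V w).map F := by
  simp [wordSubspace]

lemma wordSubspace_append_false (w : List Bool) :
    wordSubspace F V (w ++ [false]) = (wordSubspace F V w).comap V := by
  simp [wordSubspace]

lemma map_wordSubspace (α : M ≃ₗ[k] M') (hF : ∀ x, α (F x) = F' (α x))
    (hV : ∀ x, α (V x) = V' (α x)) (w : List Bool) :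
    (wordSubspace F V w).map α.toLinearMap = wordSubspace F' V' w := by
  induction w using List.reverseRecOn with
  | nil => simp [wordSubspace]
  | append_singleton w b ih =>
    cases b
    · rw [wordSubspace_append_false, wordSubspace_append_false, ← ih]
      ext y
      obtain ⟨x, rfl⟩ := α.surjective y
      simp [← hV]
    · rw [wordSubspace_append_true, wordSubspace_append_true, ← ih, ← Submodule.map_comp,
        ← Submodule.map_comp]
      congr 1
      exact LinearMap.ext hF

lemma finrank_wordSubspace_eq (α : M ≃ₗ[k] M') (hF : ∀ x, α (F x) = F' (α x))
    (hV : ∀ x, α (V x) = V' (α x)) (w : List Bool) :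
    finrank k (wordSubspace F V w) = finrank k (wordSubspace F' V' w) := by
  rw [← map_wordSubspace α hF hV, α.finrank_map_eq]

lemma map_le_comap_of_range_le_ker (hVF : LinearMap.range F ≤ LinearMap.ker V)
    (A B : Submodule k M) : A.map F ≤ B.comap V :=
  LinearMap.map_le_range.trans (hVF.trans (LinearMap.ker_le_comap V))

lemma wordSubspace_total (hVF : LinearMap.range F ≤ LinearMap.ker V) (w w' : List Bool) :
    wordSubspace F V w ≤ wordSubspace F V w' ∨ wordSubspace F V w' ≤ wordSubspace F V w := by
  induction w using List.reverseRecOn generalizing w' with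
  | nil => exact .inr le_top
  | append_singleton w b ih =>
    cases w' using List.reverseRecOn with
    | nil => exact .inl le_top
    | append_singleton w' b' =>
      cases b <;> cases b' <;> simp only [wordSubspace_append_true, wordSubspace_append_false]
      · exact (ih w').imp (Submodule.comap_mono ·) (Submodule.comap_mono ·)
      · exact .inr (map_le_comap_of_range_le_ker hVF _ _)
      · exact .inl (map_le_comap_of_range_le_ker hVF _ _)
      · exact (ih w').imp (Submodule.map_mono ·) (Submodule.map_mono ·)

/-- The words naming the members of the canonical flag. As a word acts on `M`, the zero subspace
gets the extra name `none`. -/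
abbrev FlagWord := Option (List Bool)

namespace FlagWord

/-- The name of `F(N)`, given a name of `N`. -/
def applyF : FlagWord → FlagWord
  | none => none
  | some w => some (w ++ [true])

/-- The name of `V⁻¹(N)`, given a name of `N`. For `N = 0` this is `ker V = F(M)`. -/
def applyV : FlagWord → FlagWord
  | none => some [true]
  | some w => some (w ++ [false])

end FlagWord

/-- The member of the canonical flag with a given name. -/
def flagSubspace (F : M →ₛₗ[σ] M) (V : M →ₛₗ[τ] M) : FlagWord → Submodule k M
  | none => ⊥
  | some w => wordSubspace F V w

lemma flagSubspace_applyF (o : FlagWord) :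
    flagSubspace F V o.applyF = (flagSubspace F V o).map F := by
  cases o with
  | none => exact (Submodule.map_bot F).symm
  | some w => exact wordSubspace_append_true w

lemma flagSubspace_applyV (hVF : LinearMap.ker V = LinearMap.range F) (o : FlagWord) :
    flagSubspace F V o.applyV = (flagSubspace F V o).comap V := by
  cases o with
  | none => exact (Submodule.map_top F).trans hVF.symm
  | some w => exact wordSubspace_append_false w

lemma flagSubspace_eq_map_or_eq_comap (o : FlagWord) :
    (∃ o', flagSubspace F V o = (flagSubspace F V o').map F) ∨
      ∃ o', flagSubspace F V o = (flagSubspace F V o').comap V := by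
  rcases o with - | w
  · exact .inl ⟨none, (Submodule.map_bot F).symm⟩
  cases w using List.reverseRecOn with
  | nil => exact .inr ⟨some [], (Submodule.comap_top V).symm⟩
  | append_singleton w b =>
    cases b
    · exact .inr ⟨some w, wordSubspace_append_false w⟩
    · exact .inl ⟨some w, wordSubspace_append_true w⟩

lemma flagSubspace_total (hVF : LinearMap.range F ≤ LinearMap.ker V) :
    ∀ o o' : FlagWord, flagSubspace F V o ≤ flagSubspace F V o' ∨
      flagSubspace F V o' ≤ flagSubspace F V o
  | none, _ => .inl bot_le
  | _, none => .inr bot_le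
  | some w, some w' => wordSubspace_total hVF w w'

lemma flagSubspace_le_iff [FiniteDimensional k M] (hVF : LinearMap.range F ≤ LinearMap.ker V)
    (o o' : FlagWord) : flagSubspace F V o ≤ flagSubspace F V o' ↔
      finrank k (flagSubspace F V o) ≤ finrank k (flagSubspace F V o') := by
  refine ⟨Submodule.finrank_mono, fun h ↦ ?_⟩
  obtain hle | hge := flagSubspace_total hVF o o'
  · exact hle
  · exact (Submodule.eq_of_le_of_finrank_le hge h).ge

theorem isCanonicalFlag_flagSubspace {r : ℕ} {rank : FlagWord → Fin (r + 1)}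
    {name : Fin (r + 1) → FlagWord} (hname : Function.RightInverse name rank)
    (hVF : LinearMap.ker V = LinearMap.range F)
    (hrank : ∀ o o', rank o ≤ rank o' ↔ flagSubspace F V o ≤ flagSubspace F V o') :
    IsCanonicalFlag F V (fun i ↦ rank (name i).applyF) (fun i ↦ rank (name i).applyV)
      (fun i ↦ flagSubspace F V (name i)) := by
  have rank_eq (o o') : rank o = rank o' ↔ flagSubspace F V o = flagSubspace F V o' := by
    simp only [le_antisymm_iff, hrank]
  have flag_name (o) : flagSubspace F V (name (rank o)) = flagSubspace F V o :=
    (rank_eq _ _).1 (hname _)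
  refine ⟨fun i j hij ↦ ?_, ?_, ?_, fun i ↦ ?_, fun i ↦ ?_, fun i ↦ ?_⟩
  · rwa [lt_iff_le_not_ge, ← hrank, ← hrank, hname, hname, ← lt_iff_le_not_ge]
  · exact le_bot_iff.1 ((hrank _ none).1 ((hname 0).trans_le (Fin.zero_le _)))
  · exact top_le_iff.1 ((hrank (some []) _).1 ((Fin.le_last _).trans_eq (hname _).symm))
  · rw [flag_name, flagSubspace_applyF]
  · rw [flag_name, flagSubspace_applyV hVF]
  · rw [← hname i]
    refine (flagSubspace_eq_map_or_eq_comap (F := F) (V := V) (name i)).imp ?_ ?_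
    · rintro ⟨o, ho⟩
      exact ⟨rank o, by rw [rank_eq, flagSubspace_applyF, flag_name, ho]⟩
    · rintro ⟨o, ho⟩
      exact ⟨rank o, by rw [rank_eq, flagSubspace_applyV hVF, flag_name, ho]⟩

lemma exists_rank_of_finite_range {X : Type*} [Nonempty X] {δ : X → ℕ} (hδ : (Set.range δ).Finite) :
    ∃ (r : ℕ) (rank : X → Fin (r + 1)), Function.Surjective rank ∧
      ∀ x y, rank x ≤ rank y ↔ δ x ≤ δ y := by
  have hpos : 0 < hδ.toFinset.card := Finset.card_pos.2 (by simpa using Set.range_nonempty δ)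
  obtain ⟨r, hr⟩ := Nat.exists_eq_add_of_lt hpos
  let e := hδ.toFinset.orderIsoOfFin (k := r + 1) (by lia)
  have hmem (x : X) : δ x ∈ hδ.toFinset := by simp
  refine ⟨r, fun x ↦ e.symm ⟨δ x, hmem x⟩, fun i ↦ ?_, fun x y ↦ ?_⟩
  · obtain ⟨x, hx⟩ := hδ.mem_toFinset.1 (e i).2
    exact ⟨x, by simp [hx]⟩
  · rw [e.symm.le_iff_le, Subtype.mk_le_mk]

lemma finrank_flagSubspace_eq
    (h : ∀ w, finrank k (wordSubspace F V w) = finrank k (wordSubspace F' V' w)) :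
    ∀ o, finrank k (flagSubspace F V o) = finrank k (flagSubspace F' V' o)
  | none => (finrank_bot k M).trans (finrank_bot k M').symm
  | some w => h w

end Words

theorem exists_linearEquiv_of_finrank_wordSubspace_eq {k : Type*} [Field k] [IsAlgClosed k]
    {σ τ : k →+* k} [RingHomInvPair σ τ] [RingHomInvPair τ σ]
    {M : Type*} [AddCommGroup M] [Module k M] [FiniteDimensional k M]
    {M' : Type*} [AddCommGroup M'] [Module k M'] [FiniteDimensional k M']
    {F : M →ₛₗ[σ] M} {V : M →ₛₗ[τ] M} {F' : M' →ₛₗ[σ] M'} {V' : M' →ₛₗ[τ] M'} {q : ℕ}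
    (hFV : LinearMap.ker F = LinearMap.range V) (hVF : LinearMap.ker V = LinearMap.range F)
    (hFV' : LinearMap.ker F' = LinearMap.range V') (hVF' : LinearMap.ker V' = LinearMap.range F')
    (hq : 1 < q) (hτ : ∀ a, τ a ^ q = a)
    (h : ∀ w, finrank k (wordSubspace F V w) = finrank k (wordSubspace F' V' w)) :
    ∃ α : M ≃ₗ[k] M', (∀ x, α (F x) = F' (α x)) ∧ ∀ x, α (V x) = V' (α x) := by
  have hdim := finrank_flagSubspace_eq h
  have hfinite : (Set.range fun o ↦ finrank k (flagSubspace F V o)).Finite :=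
    (Set.finite_Iic (finrank k M)).subset (Set.range_subset_iff.2 fun _ ↦ Submodule.finrank_le _)
  obtain ⟨r, rank, hsurj, hrank⟩ := exists_rank_of_finite_range hfinite
  obtain ⟨name, hname⟩ := hsurj.hasRightInverse
  refine (isCanonicalFlag_flagSubspace hname hVF fun o o' ↦ ?_).exists_linearEquiv
    (isCanonicalFlag_flagSubspace hname hVF' fun o o' ↦ ?_) hFV hVF hFV' hVF' hq hτ
    fun i ↦ hdim (name i)
  · rw [hrank, flagSubspace_le_iff hVF.ge]
  · rw [hrank, flagSubspace_le_iff hVF'.ge, hdim, hdim]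

end Kraft

/-- (Kraft.)  Let `k` be an algebraically closed field of characteristic `p`, and let
`(M, F, V)` and `(M', F', V')` be two Dieudonné spaces of BT₁ group schemes over `k`.
They are isomorphic — i.e., there is a `k`-linear bijection `α : M → M'` with
`α ∘ F = F' ∘ α` and `α ∘ V = V' ∘ α` — if and only if for every finite word `w` in the two
subspace operations `N ↦ F(N)` and `N ↦ V⁻¹(N)`, the subspaces obtained by applying `w` to
`M` and to `M'` (using `F, V` and `F', V'` respectively) have the same dimension.
(A word is encoded as a `List Bool`, `true` standing for the image operation `N ↦ F(N)` and
`false` for the preimage operation `N ↦ V⁻¹(N)`.) -/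
theorem kraft_classification (p : ℕ) [Fact p.Prime] (k : Type*) [Field k] [CharP k p]
    [PerfectRing k p] [IsAlgClosed k]
    (M : Type*) [AddCommGroup M] [Module k M] [FiniteDimensional k M]
    (M' : Type*) [AddCommGroup M'] [Module k M'] [FiniteDimensional k M']
    (F : M →ₛₗ[frobenius k p] M)
    (V : M →ₛₗ[((frobeniusEquiv k p).symm : k →+* k)] M)
    (hFV : LinearMap.ker F = LinearMap.range V)
    (hVF : LinearMap.ker V = LinearMap.range F)
    (F' : M' →ₛₗ[frobenius k p] M')
    (V' : M' →ₛₗ[((frobeniusEquiv k p).symm : k →+* k)] M')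
    (hFV' : LinearMap.ker F' = LinearMap.range V')
    (hVF' : LinearMap.ker V' = LinearMap.range F') :
    (∃ α : M ≃ₗ[k] M', (∀ x, α (F x) = F' (α x)) ∧ ∀ x, α (V x) = V' (α x)) ↔
      ∀ w : List Bool,
        finrank k ((w.foldl
          (fun (N : Submodule k M) (b : Bool) =>
            if b then Submodule.map F N else Submodule.comap V N) ⊤ : Submodule k M))
        = finrank k ((w.foldl
          (fun (N : Submodule k M') (b : Bool) =>
            if b then Submodule.map F' N else Submodule.comap V' N) ⊤ : Submodule k M')) := by
  have : RingHomInvPair (frobenius k p) ((frobeniusEquiv k p).symm : k →+* k) :=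
    RingHomInvPair.of_ringEquiv (frobeniusEquiv k p)
  have : RingHomInvPair ((frobeniusEquiv k p).symm : k →+* k) (frobenius k p) :=
    RingHomInvPair.of_ringEquiv (frobeniusEquiv k p).symm
  constructor
  · rintro ⟨α, hF, hV⟩
    exact Kraft.finrank_wordSubspace_eq α hF hV
  · exact Kraft.exists_linearEquiv_of_finrank_wordSubspace_eq hFV hVF hFV' hVF'
      (Fact.out : p.Prime).one_lt (frobeniusEquiv k p).apply_symm_apply
end
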